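/- For every integer m ≥ 2 there exist a triconnected planar simple graph G with maximum degree at most 4 on n = 3m vertices and a cycle C in G such that every planar octilinear drawing of G in which the images of all vertices not on C lie in the interior of C has at least n/3 − 1 bends in total. -/

import Mathlib

/-!
The graph is the stacked prism `C₃ × P_m` (`prismStack`): `m` concentric triangles, the rows, where
consecutive rows are joined by three legs. The cycle `C` is the triangle of row `0`. The bound
follows once every row `i` with `i + 1 < m` has at least one bend (`row_not_straight`), because bent
edges of distinct rows are distinct (`le_totalBends`).

Suppose that row `i` is drawn without bends, as a triangle `T`. A straight octilinear triangle has
angles `45°`, `45°`, `90°`, and no octilinear direction points into an angle of `45°`. So at two of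
its vertices the leg to row `i + 1` leaves `T` to the outside (`StraightTriangle.leg_outside`), and
by connectedness the whole row `i + 1` lies outside of `T`.

If `i > 0`, then row `i - 1` lies inside of `T` (`StraightTriangle.pred_inside`): two triangles
joined to `T` by three legs each cannot both lie outside, since together with the centroid of `T`
this would be a planar drawing essentially of `K₃,₃`. Instead of the Jordan curve theorem, the proof
(`not_both_outside`) compares winding numbers. For a polyline the angle swept as seen from `z` is a
continuous function of `z` off its trace (`IsSweep`), so that winding numbers of closed curves are
constant on connected sets that avoid them (`winding_const`).

By connectedness all rows before row `i` lie inside of `T`. Hence, also for `i = 0`, the curve `C`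
is contained in the closed triangle `T`, and row `i + 1` lies in an unbounded component of the
complement of `C` (`not_isBounded_component`). This contradicts the assumption that the vertices not
on `C` lie in the interior of `C`.

Planarity of the graph is witnessed by the drawing with concentric triangles (`gridPos`).
Triconnectedness holds as one of the three columns avoids two deleted vertices, and every remaining
vertex is joined to that column within its row.
-/

/-!
Common definitions: polylines, octilinear drawings, planarity, triconnectivity.
-/

/-- A polyline: a sequence of `len + 1` points `pt 0, pt 1, …, pt len`,
consisting of `len ≥ 1` segments. (Values of `pt` beyond `len` are irrelevant.) -/
structure Polyline where
  len : ℕ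
  len_pos : 1 ≤ len
  pt : ℕ → ℝ × ℝ

namespace Polyline

/-- The number of bends of a polyline (its interior points `pt 1, …, pt (len-1)`). -/
def bends (P : Polyline) : ℕ := P.len - 1

/-- Piecewise-linear parametrization of the polyline on the interval `[0, len]`. -/
noncomputable def param (P : Polyline) (s : ℝ) : ℝ × ℝ :=
  P.pt ⌊s⌋.toNat + (s - (⌊s⌋.toNat : ℝ)) • (P.pt (⌊s⌋.toNat + 1) - P.pt ⌊s⌋.toNat)

/-- The image (trace) of the polyline in the plane. -/
noncomputable def image (P : Polyline) : Set (ℝ × ℝ) :=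
  P.param '' Set.Icc 0 (P.len : ℝ)

/-- The polyline is a simple curve. -/
def Simple (P : Polyline) : Prop :=
  Set.InjOn P.param (Set.Icc 0 (P.len : ℝ))

/-- Every segment is nondegenerate, and no two consecutive segments are collinear. -/
def Proper (P : Polyline) : Prop :=
  (∀ i < P.len, P.pt i ≠ P.pt (i + 1)) ∧
  (∀ i, i + 1 < P.len → ¬ Collinear ℝ ({P.pt i, P.pt (i + 1), P.pt (i + 2)} : Set (ℝ × ℝ)))

/-- The segment from `a` to `b` is horizontal, vertical, or diagonal at `45°`. -/
def OctiSeg (a b : ℝ × ℝ) : Prop :=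
  b.2 - a.2 = 0 ∨ b.1 - a.1 = 0 ∨ b.2 - a.2 = b.1 - a.1 ∨ b.2 - a.2 = -(b.1 - a.1)

/-- The polyline is octilinear: proper, with all segments in octilinear directions. -/
def Octilinear (P : Polyline) : Prop :=
  P.Proper ∧ ∀ i < P.len, OctiSeg (P.pt i) (P.pt (i + 1))

end Polyline

/-- Embedding of the integer grid into the real plane. -/
def toR (p : ℤ × ℤ) : ℝ × ℝ := ((p.1 : ℝ), (p.2 : ℝ))

/-- A polyline drawing of a simple graph `G` in the plane:
an injective placement of the vertices and, for each edge, a polyline whose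
endpoints are the points of the edge's endvertices, with nondegenerate segments
and no two consecutive segments collinear. -/
structure PolyDrawing {V : Type*} (G : SimpleGraph V) where
  pos : V → ℝ × ℝ
  inj : Function.Injective pos
  poly : Sym2 V → Polyline
  ends : ∀ u v, G.Adj u v →
    ({(poly s(u, v)).pt 0, (poly s(u, v)).pt (poly s(u, v)).len} : Set (ℝ × ℝ)) =
      {pos u, pos v}
  proper : ∀ e ∈ G.edgeSet, (poly e).Proper

/-- A polyline drawing is planar: every edge-polyline is a simple curve meeting the
vertex points exactly in its two endpoints, and polylines of distinct edges intersect
only in images of common endvertices. -/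
def PolyDrawing.IsPlanar {V : Type*} {G : SimpleGraph V} (D : PolyDrawing G) : Prop :=
  (∀ e ∈ G.edgeSet, (D.poly e).Simple) ∧
  (∀ u v, G.Adj u v →
    (D.poly s(u, v)).image ∩ Set.range D.pos = {D.pos u, D.pos v}) ∧
  (∀ e ∈ G.edgeSet, ∀ e' ∈ G.edgeSet, e ≠ e' →
    (D.poly e).image ∩ (D.poly e').image ⊆ D.pos '' {w | w ∈ e ∧ w ∈ e'})

/-- A simple graph is planar if it admits a planar polyline drawing in `ℝ²`. -/
def GraphPlanar {V : Type*} (G : SimpleGraph V) : Prop :=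
  ∃ D : PolyDrawing G, D.IsPlanar

/-- An octilinear drawing of a simple graph `G`: vertices are placed injectively on the
integer grid and each edge is drawn as an octilinear polyline between its endvertices. -/
structure OctiDrawing {V : Type*} (G : SimpleGraph V) where
  pos : V → ℤ × ℤ
  inj : Function.Injective pos
  poly : Sym2 V → Polyline
  ends : ∀ u v, G.Adj u v →
    ({(poly s(u, v)).pt 0, (poly s(u, v)).pt (poly s(u, v)).len} : Set (ℝ × ℝ)) =
      {toR (pos u), toR (pos v)}
  octi : ∀ e ∈ G.edgeSet, (poly e).Octilinear

/-- An octilinear drawing is planar: every edge-polyline is a simple curve meeting the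
vertex points exactly in its two endpoints, and polylines of distinct edges intersect
only in images of common endvertices. -/
def OctiDrawing.IsPlanar {V : Type*} {G : SimpleGraph V} (D : OctiDrawing G) : Prop :=
  (∀ e ∈ G.edgeSet, (D.poly e).Simple) ∧
  (∀ u v, G.Adj u v →
    (D.poly s(u, v)).image ∩ Set.range (fun w => toR (D.pos w)) =
      {toR (D.pos u), toR (D.pos v)}) ∧
  (∀ e ∈ G.edgeSet, ∀ e' ∈ G.edgeSet, e ≠ e' →
    (D.poly e).image ∩ (D.poly e').image ⊆
      (fun w => toR (D.pos w)) '' {w | w ∈ e ∧ w ∈ e'})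

/-- The total number of bends of an octilinear drawing. -/
noncomputable def OctiDrawing.totalBends {V : Type*} [Fintype V] {G : SimpleGraph V}
    (D : OctiDrawing G) : ℕ :=
  ∑ e ∈ G.edgeSet.toFinite.toFinset, (D.poly e).bends

/-- The union of the images of the polylines of a set `S` of edges. -/
noncomputable def edgesImage {V : Type*} {G : SimpleGraph V} (D : OctiDrawing G)
    (S : Set (Sym2 V)) : Set (ℝ × ℝ) :=
  ⋃ e ∈ S, (D.poly e).image

/-- The interior (in the drawing `D`) of the closed curve formed by the edges in `S`:
the union of the bounded connected components of the complement of the curve. -/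
noncomputable def interiorOf {V : Type*} {G : SimpleGraph V} (D : OctiDrawing G)
    (S : Set (Sym2 V)) : Set (ℝ × ℝ) :=
  {z | z ∉ edgesImage D S ∧ Bornology.IsBounded (connectedComponentIn (edgesImage D S)ᶜ z)}

/-- A graph is triconnected if it has at least `4` vertices and deleting
any at most `2` vertices leaves it connected. -/
def Triconnected {V : Type*} [Fintype V] (G : SimpleGraph V) : Prop :=
  4 ≤ Fintype.card V ∧ ∀ S : Set V, S.ncard ≤ 2 → (G.induce Sᶜ).Connected

/-- The maximum degree of `G` is at most `k`. -/
def MaxDegLE {V : Type*} (G : SimpleGraph V) (k : ℕ) : Prop :=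
  ∀ v, (G.neighborSet v).ncard ≤ k

section

open Set Polyline OctiDrawing

/-! ### Polylines -/

namespace Polyline

theorem param_eq (P : Polyline) (n : ℕ) {s : ℝ} (hs : s ∈ Icc (n : ℝ) (n + 1)) :
    P.param s = AffineMap.lineMap (P.pt n) (P.pt (n + 1)) (s - n) := by
  rcases eq_or_lt_of_le hs.2 with h | h
  · have : ⌊s⌋ = ((n + 1 : ℕ) : ℤ) := by rw [h]; exact_mod_cast Int.floor_natCast (R := ℝ) (n + 1)
    simp [param, h]
  · have : ⌊s⌋ = (n : ℤ) := by
      rw [Int.floor_eq_iff]; exact ⟨by exact_mod_cast hs.1, by exact_mod_cast h⟩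
    simp [param, this, AffineMap.lineMap_apply, add_comm]

theorem param_image_Icc (P : Polyline) (n : ℕ) :
    P.param '' Icc (n : ℝ) (n + 1) = segment ℝ (P.pt n) (P.pt (n + 1)) := by
  rw [segment_eq_image_lineMap]
  ext x; constructor
  · rintro ⟨s, hs, rfl⟩
    exact ⟨s - n, ⟨by linarith [hs.1], by linarith [hs.2]⟩, (P.param_eq n hs).symm⟩
  · rintro ⟨t, ht, rfl⟩
    have hs : t + n ∈ Icc (n : ℝ) (n + 1) := ⟨by linarith [ht.1], by linarith [ht.2]⟩
    exact ⟨t + n, hs, by rw [P.param_eq n hs]; simp⟩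

theorem param_natCast (P : Polyline) (n : ℕ) : P.param n = P.pt n := by
  simp [param]

theorem continuousOn_param_nat (P : Polyline) (n : ℕ) :
    ContinuousOn P.param (Icc 0 (n : ℝ)) := by
  induction n with
  | zero => simp
  | succ n ih =>
    have h : Icc (0 : ℝ) ((n + 1 : ℕ) : ℝ) = Icc 0 (n : ℝ) ∪ Icc (n : ℝ) (n + 1) := by
      rw [Icc_union_Icc_eq_Icc (by positivity) (by linarith)]; simp
    rw [h]
    refine ih.union_of_isClosed ?_ isClosed_Icc isClosed_Icc
    refine ContinuousOn.congr (f := fun s : ℝ =>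
      AffineMap.lineMap (P.pt n) (P.pt (n + 1)) (s - n)) ?_ fun s hs => P.param_eq n hs
    refine Continuous.continuousOn ?_
    exact AffineMap.lineMap_continuous.comp (by fun_prop)

theorem continuousOn_param (P : Polyline) : ContinuousOn P.param (Icc 0 (P.len : ℝ)) :=
  P.continuousOn_param_nat _

theorem isPreconnected_image (P : Polyline) : IsPreconnected P.image :=
  isPreconnected_Icc.image _ P.continuousOn_param

theorem segment_subset_image (P : Polyline) {n : ℕ} (hn : n < P.len) :
    segment ℝ (P.pt n) (P.pt (n + 1)) ⊆ P.image := by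
  rw [← param_image_Icc]
  have : ((n + 1 : ℕ) : ℝ) ≤ P.len := by exact_mod_cast hn
  push_cast at this
  exact image_mono (Icc_subset_Icc (by positivity) this)

theorem pt_zero_mem (P : Polyline) : P.pt 0 ∈ P.image :=
  P.segment_subset_image P.len_pos (left_mem_segment _ _ _)

theorem pt_len_mem (P : Polyline) : P.pt P.len ∈ P.image :=
  ⟨P.len, ⟨by positivity, le_rfl⟩, P.param_natCast _⟩

theorem image_of_bends_eq_zero (P : Polyline) (h : P.bends = 0) :
    P.image = segment ℝ (P.pt 0) (P.pt P.len) := by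
  have h1 : P.len = 1 := by have := P.len_pos; unfold bends at h; omega
  have := P.param_image_Icc 0
  simp only [image, h1]
  simpa using this

theorem OctiSeg.symm {a b : ℝ × ℝ} (h : OctiSeg a b) : OctiSeg b a := by
  unfold OctiSeg at *
  rcases h with h | h | h | h
  · left; linarith
  · right; left; linarith
  · right; right; left; linarith
  · right; right; right; linarith

/-- A simple octilinear polyline leaves each of its two endpoints along an octilinear segment,
and stays connected when that endpoint is removed. -/
theorem exists_first_segment (P : Polyline) (hs : P.Simple) (ho : P.Octilinear) {v : ℝ × ℝ}
    (hv : v = P.pt 0 ∨ v = P.pt P.len) :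
    ∃ q, q ≠ v ∧ (OctiSeg v q) ∧ segment ℝ v q ⊆ P.image ∧ IsPreconnected (P.image \ {v}) := by
  have hl := P.len_pos
  have hlen : (0 : ℝ) ≤ P.len := by positivity
  rcases hv with rfl | rfl
  · refine ⟨P.pt 1, (ho.1.1 0 hl).symm, ho.2 0 hl, P.segment_subset_image hl, ?_⟩
    have : P.image \ {P.pt 0} = P.param '' Ioc 0 (P.len : ℝ) := by
      have h0 : P.param 0 = P.pt 0 := by simpa using P.param_natCast 0
      rw [← h0, ← image_singleton, image, ← hs.image_sdiff_subset (by simp),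
        Icc_sdiff_left]
    rw [this]
    exact isPreconnected_Ioc.image _ (P.continuousOn_param.mono Ioc_subset_Icc_self)
  · obtain ⟨n, hn⟩ : ∃ n, P.len = n + 1 := ⟨P.len - 1, by omega⟩
    have h := ho.2 n (by omega)
    have h' := ho.1.1 n (by omega)
    have h'' := P.segment_subset_image (n := n) (by omega)
    rw [← hn] at h h' h''
    refine ⟨P.pt n, h', h.symm, by rwa [segment_symm], ?_⟩
    have : P.image \ {P.pt P.len} = P.param '' Ico 0 (P.len : ℝ) := by
      have h0 := P.param_natCast P.len
      rw [← h0, ← image_singleton, image, ← hs.image_sdiff_subset (by simp),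
        Icc_sdiff_right]
    rw [this]
    exact isPreconnected_Ico.image _ (P.continuousOn_param.mono Ico_subset_Icc_self)

end Polyline

/-! ### Angles swept by polylines -/

/-- The identification of the plane with `ℂ`, used for its argument function. -/
noncomputable def toC (p : ℝ × ℝ) : ℂ := ⟨p.1, p.2⟩

theorem continuous_toC : Continuous toC := Complex.equivRealProdCLM.symm.continuous

/-- The oriented angle in `(-π, π]` under which the segment from `p` to `q` is seen from `z`. The
value is meaningful, and continuous in `z`, off the segment. -/
noncomputable def seenAngle (p q z : ℝ × ℝ) : ℝ :=
  Complex.arg ((toC q - toC z) / (toC p - toC z))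

theorem toC_sub_ne_zero {p z : ℝ × ℝ} (h : p ≠ z) : toC p - toC z ≠ 0 := by
  intro h'
  have h' := sub_eq_zero.1 h'
  apply h
  have := congrArg Complex.re h'
  have := congrArg Complex.im h'
  exact Prod.ext ‹_› ‹_›

/-- The branch cut of `Complex.arg` is met only for viewpoints on the segment. -/
theorem div_mem_slitPlane {p q z : ℝ × ℝ} (h : z ∉ segment ℝ p q) :
    (toC q - toC z) / (toC p - toC z) ∈ Complex.slitPlane := by
  have hp : p ≠ z := by rintro rfl; exact h (left_mem_segment _ _ _)
  have hp' := toC_sub_ne_zero hp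
  by_contra hc
  rw [Complex.mem_slitPlane_iff_not_le_zero, not_not] at hc
  set w := (toC q - toC z) / (toC p - toC z) with hw
  rw [Complex.le_def] at hc
  have h1 : toC q - toC z = w * (toC p - toC z) := by rw [hw]; field_simp
  have hre := congrArg Complex.re h1
  have him := congrArg Complex.im h1
  simp only [Complex.mul_re, Complex.mul_im, Complex.sub_re, Complex.sub_im, hc.2, toC,
    Complex.zero_im] at hre him
  have h0 : w.re ≤ 0 := by simpa using hc.1
  apply h
  have hpos : (0 : ℝ) < 1 - w.re := by linarith
  refine ⟨-w.re / (1 - w.re), 1 / (1 - w.re), div_nonneg (by linarith) hpos.le, by positivity,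
    by field_simp; ring, ?_⟩
  ext
  · simp only [Prod.fst_add, Prod.smul_fst, smul_eq_mul]
    field_simp; linarith
  · simp only [Prod.snd_add, Prod.smul_snd, smul_eq_mul]
    field_simp; linarith

theorem continuousOn_seenAngle (p q : ℝ × ℝ) :
    ContinuousOn (seenAngle p q) (segment ℝ p q)ᶜ := by
  intro z hz
  apply ContinuousAt.continuousWithinAt
  have hp : p ≠ z := by rintro rfl; exact hz (left_mem_segment _ _ _)
  have h2 := Complex.continuousAt_arg (div_mem_slitPlane hz)
  refine ContinuousAt.comp (g := Complex.arg)
    (f := fun z => (toC q - toC z) / (toC p - toC z)) h2 ?_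
  have := continuous_toC
  exact ContinuousAt.div (by fun_prop) (by fun_prop) (toC_sub_ne_zero hp)

/-- The direction in which `p` is seen from `z`. -/
noncomputable def dirAngle (z p : ℝ × ℝ) : Real.Angle := (Complex.arg (toC p - toC z) : ℝ)

theorem coe_seenAngle {p q z : ℝ × ℝ} (hp : p ≠ z) (hq : q ≠ z) :
    (seenAngle p q z : Real.Angle) = dirAngle z q - dirAngle z p :=
  Complex.arg_div_coe_angle (toC_sub_ne_zero hq) (toC_sub_ne_zero hp)

/-- `E` is a continuous determination, for viewpoints `z` off the set `S`, of the angle swept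
along a curve from `p` to `q` with trace `S`. -/
structure IsSweep (S : Set (ℝ × ℝ)) (p q : ℝ × ℝ) (E : ℝ × ℝ → ℝ) : Prop where
  cont : ContinuousOn E Sᶜ
  coe : ∀ z ∉ S, (E z : Real.Angle) = dirAngle z q - dirAngle z p

theorem isSweep_seenAngle (p q : ℝ × ℝ) : IsSweep (segment ℝ p q) p q (seenAngle p q) where
  cont := continuousOn_seenAngle p q
  coe z hz := coe_seenAngle (by rintro rfl; exact hz (left_mem_segment _ _ _))
    (by rintro rfl; exact hz (right_mem_segment _ _ _))

theorem IsSweep.neg {S : Set (ℝ × ℝ)} {p q : ℝ × ℝ} {E : ℝ × ℝ → ℝ} (h : IsSweep S p q E) :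
    IsSweep S q p (fun z => - E z) where
  cont := h.cont.neg
  coe z hz := by rw [Real.Angle.coe_neg, h.coe z hz]; abel

/-- The sum of the angles seen along the segments of a polyline is an angle sweep of it. -/
theorem Polyline.exists_isSweep (P : Polyline) : ∃ E, IsSweep P.image (P.pt 0) (P.pt P.len) E := by
  refine ⟨fun z => ∑ i ∈ Finset.range P.len, seenAngle (P.pt i) (P.pt (i + 1)) z, ?_, ?_⟩
  · refine continuousOn_finsetSum _ fun i hi => (continuousOn_seenAngle _ _).mono ?_
    exact compl_subset_compl.2 (P.segment_subset_image (Finset.mem_range.1 hi))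
  · intro z hz
    have : ((∑ i ∈ Finset.range P.len, seenAngle (P.pt i) (P.pt (i + 1)) z : ℝ) : Real.Angle)
        = ∑ i ∈ Finset.range P.len, (seenAngle (P.pt i) (P.pt (i + 1)) z : Real.Angle) :=
      map_sum Real.Angle.coeHom _ _
    rw [this, ← Finset.sum_range_sub (fun i => dirAngle z (P.pt i))]
    refine Finset.sum_congr rfl fun i hi => (isSweep_seenAngle _ _).coe z fun h => hz ?_
    exact P.segment_subset_image (Finset.mem_range.1 hi) h

/-- A continuous real function on a preconnected set all of whose values are multiples of `2π`
is constant. -/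
theorem eq_of_coe_angle_eq_zero {S : Set (ℝ × ℝ)} (hS : IsPreconnected S) {f : ℝ × ℝ → ℝ}
    (hf : ContinuousOn f S) (h0 : ∀ z ∈ S, (f z : Real.Angle) = 0) {x y : ℝ × ℝ}
    (hx : x ∈ S) (hy : y ∈ S) : f x = f y := by
  have hc : IsPreconnected ((fun z => f z / (2 * Real.pi)) '' S) :=
    hS.image _ (hf.div_const _)
  have hpi := Real.pi_pos
  have key : ∀ z ∈ S, ∃ n : ℤ, f z / (2 * Real.pi) = n := by
    intro z hz
    obtain ⟨n, hn⟩ := Real.Angle.coe_eq_zero_iff.1 (h0 z hz)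
    exact ⟨n, by rw [← hn]; simp⟩
  have hsub : (fun z => f z / (2 * Real.pi)) '' S ⊆ range ((↑) : ℤ → ℝ) := by
    rintro _ ⟨z, hz, rfl⟩
    obtain ⟨n, hn⟩ := key z hz
    exact ⟨n, hn.symm⟩
  have hss : ((fun z => f z / (2 * Real.pi)) '' S).Subsingleton := by
    have hd : IsTotallyDisconnected (range ((↑) : ℤ → ℝ)) :=
      (countable_range _).isTotallyDisconnected
    exact hd _ hsub hc
  have := hss (mem_image_of_mem _ hx) (mem_image_of_mem _ hy)
  field_simp at this
  exact this

/-! ### Triangles -/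

/-- Twice the signed area of the triangle `a b c`. -/
def cr (a b c : ℝ × ℝ) : ℝ := (b.1 - a.1) * (c.2 - a.2) - (b.2 - a.2) * (c.1 - a.1)

/-- The barycentric coordinate of `z` at the vertex `a` of the triangle `a b c`. -/
noncomputable def bary (a b c z : ℝ × ℝ) : ℝ := cr z b c / cr a b c

theorem cr_rotate (a b c : ℝ × ℝ) : cr b c a = cr a b c := by unfold cr; ring

theorem continuous_bary (a b c : ℝ × ℝ) : Continuous (bary a b c) := by
  unfold bary cr; fun_prop

theorem bary_sum {a b c : ℝ × ℝ} (h : cr a b c ≠ 0) (z : ℝ × ℝ) :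
    bary a b c z + bary b c a z + bary c a b z = 1 := by
  unfold bary
  rw [cr_rotate a b c, ← cr_rotate c a b]
  field_simp
  unfold cr; ring

theorem bary_comb {a b c : ℝ × ℝ} (h : cr a b c ≠ 0) (z : ℝ × ℝ) :
    z = bary a b c z • a + bary b c a z • b + bary c a b z • c := by
  unfold bary
  rw [cr_rotate a b c, ← cr_rotate c a b]
  ext
  · simp only [Prod.fst_add, Prod.smul_fst, smul_eq_mul]
    field_simp
    unfold cr; ring
  · simp only [Prod.snd_add, Prod.smul_snd, smul_eq_mul]
    field_simp
    unfold cr; ring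

theorem bary_of_comb {a b c : ℝ × ℝ} (h : cr a b c ≠ 0) {x y t : ℝ} (hs : x + y + t = 1) :
    bary a b c (x • a + y • b + t • c) = x := by
  unfold bary
  rw [div_eq_iff h]
  obtain rfl : x = 1 - y - t := by linarith
  simp only [cr, Prod.fst_add, Prod.snd_add, Prod.smul_fst, Prod.smul_snd, smul_eq_mul]
  ring

/-- The open triangle `a b c`, described by its barycentric coordinates; meaningful only if
`cr a b c ≠ 0`. -/
def openTri (a b c : ℝ × ℝ) : Set (ℝ × ℝ) :=
  {z | 0 < bary a b c z ∧ 0 < bary b c a z ∧ 0 < bary c a b z}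

/-- The closed triangle `a b c`, described by its barycentric coordinates; meaningful only if
`cr a b c ≠ 0`. -/
def closedTri (a b c : ℝ × ℝ) : Set (ℝ × ℝ) :=
  {z | 0 ≤ bary a b c z ∧ 0 ≤ bary b c a z ∧ 0 ≤ bary c a b z}

theorem openTri_rotate (a b c : ℝ × ℝ) : openTri b c a = openTri a b c := by
  ext z; simp only [openTri, mem_ofPred_eq]; tauto

theorem closedTri_rotate (a b c : ℝ × ℝ) : closedTri b c a = closedTri a b c := by
  ext z; simp only [closedTri, mem_ofPred_eq]; tauto

theorem isOpen_openTri (a b c : ℝ × ℝ) : IsOpen (openTri a b c) :=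
  (isOpen_lt continuous_const (continuous_bary a b c)).inter
    ((isOpen_lt continuous_const (continuous_bary b c a)).inter
      (isOpen_lt continuous_const (continuous_bary c a b)))

theorem isClosed_closedTri (a b c : ℝ × ℝ) : IsClosed (closedTri a b c) :=
  (isClosed_le continuous_const (continuous_bary a b c)).inter
    ((isClosed_le continuous_const (continuous_bary b c a)).inter
      (isClosed_le continuous_const (continuous_bary c a b)))

theorem mem_segment_of_bary_eq_zero {a b c z : ℝ × ℝ} (h : cr a b c ≠ 0)
    (hz : z ∈ closedTri a b c) (h0 : bary a b c z = 0) : z ∈ segment ℝ b c := by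
  refine ⟨bary b c a z, bary c a b z, hz.2.1, hz.2.2, ?_, ?_⟩
  · linarith [bary_sum h z]
  · have := bary_comb h z
    rw [h0, zero_smul, zero_add] at this
    exact this.symm

/-- A point of the closed triangle lies in the open one or on one of the sides. -/
theorem closedTri_subset {a b c : ℝ × ℝ} (h : cr a b c ≠ 0) :
    closedTri a b c ⊆ openTri a b c ∪ (segment ℝ a b ∪ segment ℝ b c ∪ segment ℝ c a) := by
  intro z hz
  rcases hz.1.eq_or_lt with h1 | h1
  · exact .inr (.inl (.inr (mem_segment_of_bary_eq_zero h hz h1.symm)))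
  rcases hz.2.1.eq_or_lt with h2 | h2
  · exact .inr (.inr (mem_segment_of_bary_eq_zero (by rwa [cr_rotate])
      (by rwa [closedTri_rotate]) h2.symm))
  rcases hz.2.2.eq_or_lt with h3 | h3
  · exact .inr (.inl (.inl (mem_segment_of_bary_eq_zero (by rwa [← cr_rotate])
      (by rwa [← closedTri_rotate]) h3.symm)))
  exact .inl ⟨h1, h2, h3⟩

/-- A connected set avoiding the sides of a triangle lies entirely inside or entirely outside. -/
theorem subset_openTri_or_compl {a b c : ℝ × ℝ} (h : cr a b c ≠ 0) {S : Set (ℝ × ℝ)}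
    (hS : IsPreconnected S)
    (hd : Disjoint S (segment ℝ a b ∪ segment ℝ b c ∪ segment ℝ c a)) :
    S ⊆ openTri a b c ∨ S ⊆ (closedTri a b c)ᶜ := by
  refine isPreconnected_iff_subset_of_disjoint.1 hS _ _ (isOpen_openTri a b c)
    (isClosed_closedTri a b c).isOpen_compl ?_ ?_
  · intro z hz
    by_cases hc : z ∈ closedTri a b c
    · rcases closedTri_subset h hc with h1 | h1
      · exact .inl h1
      · exact absurd h1 (disjoint_left.1 hd hz)
    · exact .inr hc
  · refine eq_empty_of_forall_notMem fun z hz => hz.2.2 ?_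
    exact ⟨hz.2.1.1.le, hz.2.1.2.1.le, hz.2.1.2.2.le⟩

theorem segment_subset_closedTri {a b c : ℝ × ℝ} (h : cr a b c ≠ 0) :
    segment ℝ b c ⊆ closedTri a b c := by
  rintro z ⟨y, t, hy, ht, hs, rfl⟩
  have e : y • b + t • c = (0 : ℝ) • a + y • b + t • c := by simp
  have e2 : y • b + t • c = y • b + t • c + (0 : ℝ) • a := by simp
  have e3 : y • b + t • c = t • c + (0 : ℝ) • a + y • b := by simp [add_comm]
  refine ⟨?_, ?_, ?_⟩
  · rw [e, bary_of_comb h (by linarith)]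
  · rw [e2, bary_of_comb (by rwa [cr_rotate]) (by linarith)]; exact hy
  · rw [e3, bary_of_comb (by rwa [← cr_rotate]) (by linarith)]; exact ht

theorem bary_add_smul (a b c z : ℝ × ℝ) (h : cr a b c ≠ 0) (t : ℝ) :
    bary a b c (z + t • (b - a)) = bary a b c z - t := by
  unfold bary
  field_simp
  simp only [cr, Prod.fst_add, Prod.snd_add, Prod.smul_fst, Prod.smul_snd, smul_eq_mul,
    Prod.fst_sub, Prod.snd_sub]
  ring

/-- A point beyond the side `b c` escapes to infinity along a ray parallel to `b - a`, which moves
away from the line through `b` and `c`. -/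
theorem not_isBounded_component_aux {a b c : ℝ × ℝ} (h : cr a b c ≠ 0) {X : Set (ℝ × ℝ)}
    (hX : X ⊆ closedTri a b c) {z : ℝ × ℝ} (hz : bary a b c z < 0) :
    ¬ Bornology.IsBounded (connectedComponentIn Xᶜ z) := by
  intro hb
  set R := (fun t : ℝ => z + t • (b - a)) '' Ici 0 with hR
  have hR1 : IsPreconnected R := isPreconnected_Ici.image _ (by fun_prop)
  have hz0 : z ∈ R := ⟨0, by simp, by simp⟩
  have hR2 : R ⊆ Xᶜ := by
    rintro _ ⟨t, ht, rfl⟩ hx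
    have := (hX hx).1
    simp only [bary_add_smul a b c z h] at this
    have ht : 0 ≤ t := ht
    linarith
  have hRb := hb.subset (hR1.subset_connectedComponentIn hz0 hR2)
  have hne : b - a ≠ 0 := by
    intro h0
    rw [sub_eq_zero] at h0
    apply h; rw [h0]; unfold cr; ring
  obtain ⟨M, hM⟩ := (Metric.isBounded_iff.1 hRb)
  have hn : 0 < ‖b - a‖ := norm_pos_iff.2 hne
  have hM0 : 0 ≤ M := dist_nonneg.trans (hM hz0 hz0)
  have h1 := hM (x := z + ((M + 1) / ‖b - a‖) • (b - a)) ⟨_, by simp; positivity, rfl⟩ hz0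
  rw [dist_eq_norm, add_sub_cancel_left, norm_smul, Real.norm_of_nonneg (by positivity)] at h1
  field_simp at h1
  linarith

/-- Points outside a triangle lie in an unbounded component of the complement of any set
contained in the triangle. -/
theorem not_isBounded_component {a b c : ℝ × ℝ} (h : cr a b c ≠ 0) {X : Set (ℝ × ℝ)}
    (hX : X ⊆ closedTri a b c) {z : ℝ × ℝ} (hz : z ∉ closedTri a b c) :
    ¬ Bornology.IsBounded (connectedComponentIn Xᶜ z) := by
  simp only [closedTri, mem_ofPred_eq, not_and_or, not_le] at hz
  rcases hz with hz | hz | hz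
  · exact not_isBounded_component_aux h hX hz
  · exact not_isBounded_component_aux (by rwa [cr_rotate]) (by rwa [closedTri_rotate]) hz
  · exact not_isBounded_component_aux (by rwa [← cr_rotate]) (by rwa [← closedTri_rotate]) hz

/-! ### The winding number of a triangle -/

theorem im_div (a b z : ℝ × ℝ) :
    ((toC b - toC z) / (toC a - toC z)).im = cr z a b / Complex.normSq (toC a - toC z) := by
  rw [Complex.div_im]
  simp only [toC, cr, Complex.sub_re, Complex.sub_im]
  ring

theorem seenAngle_pos {a b z : ℝ × ℝ} (h : 0 < cr z a b) : 0 < seenAngle a b z := by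
  have ha : a ≠ z := by rintro rfl; unfold cr at h; linarith
  have : 0 < ((toC b - toC z) / (toC a - toC z)).im := by
    rw [im_div]
    exact div_pos h (Complex.normSq_pos.2 (toC_sub_ne_zero ha))
  refine lt_of_le_of_ne (Complex.arg_nonneg_iff.2 this.le) fun h0 => ?_
  have := (Complex.arg_eq_zero_iff.1 h0.symm).2
  linarith

theorem seenAngle_neg {a b z : ℝ × ℝ} (h : cr z a b < 0) : seenAngle a b z < 0 := by
  have ha : a ≠ z := by rintro rfl; unfold cr at h; linarith
  refine Complex.arg_neg_iff.2 ?_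
  rw [im_div]
  exact div_neg_of_neg_of_pos h (Complex.normSq_pos.2 (toC_sub_ne_zero ha))

/-- The winding number of a triangle about an inner point does not vanish. -/
theorem sum_seenAngle_ne_zero {a b c z : ℝ × ℝ} (h : cr a b c ≠ 0) (hz : z ∈ openTri a b c) :
    seenAngle a b z + seenAngle b c z + seenAngle c a z ≠ 0 := by
  obtain ⟨h1, h2, h3⟩ := hz
  unfold bary at h1 h2 h3
  rw [cr_rotate a b c] at h2
  rw [← cr_rotate c a b] at h3
  rcases lt_or_gt_of_ne h with h | h
  · have neg : ∀ x, 0 < x / cr a b c → x < 0 := fun x hx => by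
      rcases div_pos_iff.1 hx with h' | h' <;> linarith
    have h1 := seenAngle_neg (neg _ h1)
    have h2 := seenAngle_neg (neg _ h2)
    have h3 := seenAngle_neg (neg _ h3)
    linarith
  · have h1 := seenAngle_pos ((div_pos_iff_of_pos_right h).1 h1)
    have h2 := seenAngle_pos ((div_pos_iff_of_pos_right h).1 h2)
    have h3 := seenAngle_pos ((div_pos_iff_of_pos_right h).1 h3)
    linarith

/-- For two numbers in an open half plane, given by its inner normal `conj k`, the argument of the
quotient is the difference of arguments, without a multiple of `2π`. -/
theorem arg_div_eq_of_halfPlane {x y k : ℂ} (hx : 0 < (k * x).re) (hy : 0 < (k * y).re) :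
    Complex.arg (y / x) = Complex.arg (k * y) - Complex.arg (k * x) := by
  have hk : k ≠ 0 := by rintro rfl; simp at hx
  have hx0 : x ≠ 0 := by rintro rfl; simp at hx
  have hy0 : y ≠ 0 := by rintro rfl; simp at hy
  have e : y / x = (k * y) / (k * x) := by field_simp
  have h1 := abs_lt.1 (Complex.abs_arg_lt_pi_div_two_iff.2 (.inl hx))
  have h2 := abs_lt.1 (Complex.abs_arg_lt_pi_div_two_iff.2 (.inl hy))
  rw [e]
  have h3 := Complex.arg_div_coe_angle (mul_ne_zero hk hy0) (mul_ne_zero hk hx0)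
  rw [← Real.Angle.coe_sub] at h3
  have h4 := congrArg Real.Angle.toReal h3
  rw [Real.Angle.toReal_coe_eq_self_iff.2 ⟨Complex.neg_pi_lt_arg _, Complex.arg_le_pi _⟩,
    Real.Angle.toReal_coe_eq_self_iff.2 ⟨by linarith, by linarith⟩] at h4
  exact h4

/-- From a point beyond the side `b c` the whole triangle is seen within a half plane. -/
theorem sum_seenAngle_eq_zero_aux {a b c z : ℝ × ℝ} (h : cr a b c ≠ 0)
    (hz : bary a b c z < 0) :
    seenAngle a b z + seenAngle b c z + seenAngle c a z = 0 := by
  set k : ℂ := (cr a b c : ℂ) * ⟨b.2 - c.2, b.1 - c.1⟩ with hk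
  have key : ∀ p : ℝ × ℝ, (k * (toC p - toC z)).re = cr a b c * (cr p b c - cr z b c) := by
    intro p
    simp only [hk, toC, cr, Complex.mul_re, Complex.mul_im, Complex.sub_re, Complex.sub_im,
      Complex.ofReal_re, Complex.ofReal_im]
    ring
  have hz' : cr a b c * cr z b c < 0 := by
    unfold bary at hz
    have h1 : 0 < (cr a b c) ^ 2 := by positivity
    have h2 : cr z b c = cr z b c / cr a b c * cr a b c := by field_simp
    rw [h2]; nlinarith
  have ha : 0 < (k * (toC a - toC z)).re := by
    rw [key]; nlinarith [sq_nonneg (cr a b c)]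
  have hb : 0 < (k * (toC b - toC z)).re := by
    have : cr b b c = 0 := by unfold cr; ring
    rw [key, this]; nlinarith
  have hc : 0 < (k * (toC c - toC z)).re := by
    have : cr c b c = 0 := by unfold cr; ring
    rw [key, this]; nlinarith
  unfold seenAngle
  rw [arg_div_eq_of_halfPlane ha hb, arg_div_eq_of_halfPlane hb hc, arg_div_eq_of_halfPlane hc ha]
  ring

/-- The winding number of a triangle about an outer point is zero. -/
theorem sum_seenAngle_eq_zero {a b c z : ℝ × ℝ} (h : cr a b c ≠ 0)
    (hz : z ∉ closedTri a b c) :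
    seenAngle a b z + seenAngle b c z + seenAngle c a z = 0 := by
  simp only [closedTri, mem_ofPred_eq, not_and_or, not_le] at hz
  rcases hz with hz | hz | hz
  · exact sum_seenAngle_eq_zero_aux h hz
  · linarith [sum_seenAngle_eq_zero_aux (a := b) (b := c) (c := a) (by rwa [cr_rotate]) hz]
  · linarith [sum_seenAngle_eq_zero_aux (a := c) (b := a) (c := b) (by rwa [← cr_rotate]) hz]

/-! ### Octilinear angles -/

/-- A nondegenerate octilinear triangle with vertex `0` and no right angle there has an angle of
`45°` at `0`, whose open cone contains no octilinear direction. -/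
theorem no_octi_in_cone {U W d : ℝ × ℝ} (hU : OctiSeg 0 U) (hW : OctiSeg 0 W)
    (hUW : OctiSeg U W) (hcr : cr 0 U W ≠ 0) (hdot : U.1 * W.1 + U.2 * W.2 ≠ 0)
    (hd : OctiSeg 0 d) {α β : ℝ} (hα : 0 < α) (hβ : 0 < β) (hdd : d = α • U + β • W) : False := by
  obtain ⟨u1, u2⟩ := U
  obtain ⟨w1, w2⟩ := W
  subst hdd
  simp only [OctiSeg, cr, Prod.fst_zero, Prod.snd_zero, sub_zero, Prod.fst_add, Prod.snd_add,
    Prod.smul_fst, Prod.smul_snd, smul_eq_mul] at *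
  have h1 : α + β ≠ 0 := by positivity
  have h2 : α + 2 * β ≠ 0 := by positivity
  have h3 : 2 * α + β ≠ 0 := by positivity
  have hα := hα.ne'
  have hβ := hβ.ne'
  rcases hU with hU | hU | hU | hU <;> rcases hW with hW | hW | hW | hW <;> grind

/-- A curve `S` that leaves the vertex `a` of an octilinear triangle along an octilinear segment and
otherwise avoids the sides stays outside the triangle, unless the angle at `a` is right. -/
theorem leg_subset_compl {a b c q : ℝ × ℝ} {S : Set (ℝ × ℝ)} (h : cr a b c ≠ 0)
    (hab : OctiSeg a b) (hac : OctiSeg a c) (hbc : OctiSeg b c)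
    (hdot : (b.1 - a.1) * (c.1 - a.1) + (b.2 - a.2) * (c.2 - a.2) ≠ 0)
    (hqa : q ≠ a) (haq : OctiSeg a q) (hqS : segment ℝ a q ⊆ S)
    (hS : IsPreconnected (S \ {a}))
    (hd : S ∩ (segment ℝ a b ∪ segment ℝ b c ∪ segment ℝ c a) ⊆ {a}) :
    S \ {a} ⊆ (closedTri a b c)ᶜ := by
  have hdis : Disjoint (S \ {a}) (segment ℝ a b ∪ segment ℝ b c ∪ segment ℝ c a) := by
    rw [disjoint_left]
    exact fun z hz hz' => hz.2 (hd ⟨hz.1, hz'⟩)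
  rcases subset_openTri_or_compl h hS hdis with hin | hout
  swap
  · exact hout
  exfalso
  have hq : q ∈ openTri a b c := hin ⟨hqS (right_mem_segment _ _ _), hqa⟩
  have e := bary_comb h q
  have es := bary_sum h q
  refine no_octi_in_cone (U := b - a) (W := c - a) (d := q - a) ?_ ?_ ?_ ?_ hdot ?_ hq.2.1 hq.2.2 ?_
  · simpa [OctiSeg] using hab
  · simpa [OctiSeg] using hac
  · simpa [OctiSeg] using hbc
  · simpa [cr] using h
  · simpa [OctiSeg] using haq
  · have h1 : bary a b c q = 1 - bary b c a q - bary c a b q := by linarith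
    rw [h1] at e
    nth_rewrite 1 [e]
    module

/-! ### Two nested triangles on the same side -/

/-- The winding number of the closed curve `pk → qk → ql → pl → pk`, where the first three pieces
have traces `Lk`, `T`, `Ll` and the last one is a segment, is constant on connected sets avoiding
the curve. -/
theorem winding_const {pk pl qk ql : ℝ × ℝ} {Lk Ll T : Set (ℝ × ℝ)} {Ek El F : ℝ × ℝ → ℝ}
    (hk : IsSweep Lk pk qk Ek) (hl : IsSweep Ll pl ql El) (hT : IsSweep T qk ql F)
    {S : Set (ℝ × ℝ)} (hS : IsPreconnected S) (h1 : Disjoint S Lk) (h2 : Disjoint S Ll)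
    (h3 : Disjoint S T) (h4 : Disjoint S (segment ℝ pk pl)) {x y : ℝ × ℝ} (hx : x ∈ S)
    (hy : y ∈ S) :
    Ek x + F x - El x - seenAngle pk pl x = Ek y + F y - El y - seenAngle pk pl y := by
  rw [← subset_compl_iff_disjoint_right] at h1 h2 h3 h4
  have hs := isSweep_seenAngle pk pl
  refine eq_of_coe_angle_eq_zero (f := fun z => Ek z + F z - El z - seenAngle pk pl z) hS
    ((((hk.cont.mono h1).add (hT.cont.mono h3)).sub (hl.cont.mono h2)).sub (hs.cont.mono h4))
    (fun z hz => ?_) hx hy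
  simp only [Real.Angle.coe_sub, Real.Angle.coe_add]
  rw [hk.coe z (h1 hz), hl.coe z (h2 hz), hT.coe z (h3 hz), hs.coe z (h4 hz)]
  abel

/-- The winding number of a closed curve `a → b → c → a` consisting of three pieces with traces
`A`, `B`, `C` is constant on connected sets avoiding the curve. -/
theorem winding_const_triangle {a b c : ℝ × ℝ} {A B C : Set (ℝ × ℝ)} {E F G : ℝ × ℝ → ℝ}
    (hE : IsSweep A a b E) (hF : IsSweep B b c F) (hG : IsSweep C c a G)
    {S : Set (ℝ × ℝ)} (hS : IsPreconnected S) (h1 : Disjoint S A) (h2 : Disjoint S B)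
    (h3 : Disjoint S C) {x y : ℝ × ℝ} (hx : x ∈ S) (hy : y ∈ S) :
    E x + F x + G x = E y + F y + G y := by
  rw [← subset_compl_iff_disjoint_right] at h1 h2 h3
  refine eq_of_coe_angle_eq_zero (f := fun z => E z + F z + G z) hS
    (((hE.cont.mono h1).add (hF.cont.mono h2)).add (hG.cont.mono h3))
    (fun z hz => ?_) hx hy
  simp only [Real.Angle.coe_add]
  rw [hE.coe z (h1 hz), hF.coe z (h2 hz), hG.coe z (h3 hz)]
  abel

/-- The centroid of the triangle `a b c`. -/
noncomputable def centroid3 (a b c : ℝ × ℝ) : ℝ × ℝ :=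
  (1 / 3 : ℝ) • a + (1 / 3 : ℝ) • b + (1 / 3 : ℝ) • c

theorem centroid3_rotate (a b c : ℝ × ℝ) : centroid3 b c a = centroid3 a b c := by
  unfold centroid3; abel

/-- The segment from a vertex to the centroid stays in the triangle and off the opposite side. -/
theorem mem_segment_centroid {a b c : ℝ × ℝ} (h : cr a b c ≠ 0) {z : ℝ × ℝ}
    (hz : z ∈ segment ℝ a (centroid3 a b c)) : z ∈ closedTri a b c ∧ 0 < bary a b c z := by
  obtain ⟨s, t, hs, ht, hst, rfl⟩ := hz
  have e : s • a + t • centroid3 a b c = (s + t / 3) • a + (t / 3) • b + (t / 3) • c := by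
    unfold centroid3; module
  have e2 : s • a + t • centroid3 a b c = (t / 3) • b + (t / 3) • c + (s + t / 3) • a := by
    unfold centroid3; module
  have e3 : s • a + t • centroid3 a b c = (t / 3) • c + (s + t / 3) • a + (t / 3) • b := by
    unfold centroid3; module
  have b1 : bary a b c (s • a + t • centroid3 a b c) = s + t / 3 := by
    rw [e, bary_of_comb h (by linarith)]
  have b2 : bary b c a (s • a + t • centroid3 a b c) = t / 3 := by
    rw [e2, bary_of_comb (by rwa [cr_rotate]) (by linarith)]
  have b3 : bary c a b (s • a + t • centroid3 a b c) = t / 3 := by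
    rw [e3, bary_of_comb (by rwa [← cr_rotate]) (by linarith)]
  refine ⟨⟨?_, ?_, ?_⟩, ?_⟩
  · rw [b1]; positivity
  · rw [b2]; positivity
  · rw [b3]; positivity
  · rw [b1]; linarith

theorem centroid3_mem_openTri {a b c : ℝ × ℝ} (h : cr a b c ≠ 0) :
    centroid3 a b c ∈ openTri a b c := by
  refine ⟨(mem_segment_centroid h (right_mem_segment _ _ _)).2, ?_, ?_⟩
  · rw [← centroid3_rotate]
    exact (mem_segment_centroid (by rwa [cr_rotate]) (right_mem_segment _ _ _)).2
  · rw [centroid3_rotate c a b]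
    exact (mem_segment_centroid (by rwa [← cr_rotate]) (right_mem_segment _ _ _)).2

theorem bary_left {a b c : ℝ × ℝ} : bary a b c b = 0 := by
  unfold bary cr; simp
theorem bary_right {a b c : ℝ × ℝ} : bary a b c c = 0 := by
  unfold bary cr; ring

theorem bary_of_mem_segment {a b c z : ℝ × ℝ} (h : cr a b c ≠ 0) (hz : z ∈ segment ℝ b c) :
    bary a b c z = 0 := by
  obtain ⟨y, t, hy, ht, hs, rfl⟩ := hz
  have e : y • b + t • c = (0 : ℝ) • a + y • b + t • c := by simp
  rw [e, bary_of_comb h (by linarith)]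

/-- The closed curve `b → qb → qc → c → b` has the same winding number about `ra` and about the
centroid of the triangle: both points are joined to the vertex `a` without meeting the curve. -/
theorem winding_vertex {a b c qb qc ra : ℝ × ℝ} (h : cr a b c ≠ 0)
    {Lb Lc T R : Set (ℝ × ℝ)} {Eb Ec F : ℝ × ℝ → ℝ}
    (hb : IsSweep Lb b qb Eb) (hc : IsSweep Lc c qc Ec) (hT : IsSweep T qb qc F)
    (hR : IsPreconnected R) (haR : a ∈ R) (hrR : ra ∈ R)
    (d1 : Disjoint R Lb) (d2 : Disjoint R Lc) (d3 : Disjoint R T)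
    (d4 : Disjoint R (segment ℝ b c))
    (o1 : Lb ∩ closedTri a b c ⊆ {b}) (o2 : Lc ∩ closedTri a b c ⊆ {c})
    (o3 : Disjoint T (closedTri a b c)) :
    Eb ra + F ra - Ec ra - seenAngle b c ra =
      Eb (centroid3 a b c) + F (centroid3 a b c) - Ec (centroid3 a b c)
        - seenAngle b c (centroid3 a b c) := by
  refine (winding_const hb hc hT hR d1 d2 d3 d4 hrR haR).trans ?_
  refine winding_const hb hc hT (S := segment ℝ a (centroid3 a b c))
    (convex_segment _ _).isPreconnected ?_ ?_ ?_ ?_ (left_mem_segment _ _ _)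
    (right_mem_segment _ _ _)
  · refine disjoint_left.2 fun z hz hz' => ?_
    obtain ⟨z1, z2⟩ := mem_segment_centroid h hz
    have : z = b := o1 ⟨hz', z1⟩
    rw [this, bary_left] at z2
    exact lt_irrefl _ z2
  · refine disjoint_left.2 fun z hz hz' => ?_
    obtain ⟨z1, z2⟩ := mem_segment_centroid h hz
    have : z = c := o2 ⟨hz', z1⟩
    rw [this, bary_right] at z2
    exact lt_irrefl _ z2
  · exact disjoint_left.2 fun z hz hz' => disjoint_left.1 o3 hz' (mem_segment_centroid h hz).1
  · refine disjoint_left.2 fun z hz hz' => ?_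
    have z2 := (mem_segment_centroid h hz).2
    rw [bary_of_mem_segment h hz'] at z2
    exact lt_irrefl _ z2

/-- A straight triangle `a b c` cannot have two triangles `q` and `r`, each joined to it by three
legs, both drawn outside. Here `La`, `Lb`, `Lc` are the legs to `q`, and `Qbc`, `Qca`, `Qab` the
sides of `q`; `Ra`, `Rb`, `Rc` are the legs to `r`, and `Rab`, `Rca` two of the sides of `r`.

The winding numbers of the three quadrilaterals `b qb qc c`, `c qc qa a`, `a qa qb b` add up to the
winding number of `q` minus that of `a b c`. Along connections that avoid the respective curves,
each of the three summands and the winding number of `q` are the same at `ra` and at the centroid of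
`a b c`. Hence so is the winding number of `a b c`, which is impossible, as `ra` lies outside. -/
theorem not_both_outside {a b c qa qb qc ra rb rc : ℝ × ℝ} (h : cr a b c ≠ 0)
    {La Lb Lc Qbc Qca Qab Ra Rb Rc Rab Rca : Set (ℝ × ℝ)} {Ea Eb Ec Fbc Fca Fab : ℝ × ℝ → ℝ}
    (hEa : IsSweep La a qa Ea) (hEb : IsSweep Lb b qb Eb) (hEc : IsSweep Lc c qc Ec)
    (hFbc : IsSweep Qbc qb qc Fbc) (hFca : IsSweep Qca qc qa Fca) (hFab : IsSweep Qab qa qb Fab)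
    (cRa : IsPreconnected Ra) (cRb : IsPreconnected Rb) (cRc : IsPreconnected Rc)
    (cRab : IsPreconnected Rab) (cRca : IsPreconnected Rca)
    (ma : a ∈ Ra) (ma' : ra ∈ Ra) (mb : b ∈ Rb) (mb' : rb ∈ Rb) (mc : c ∈ Rc) (mc' : rc ∈ Rc)
    (mab : ra ∈ Rab) (mab' : rb ∈ Rab) (mca : rc ∈ Rca) (mca' : ra ∈ Rca)
    (dRaLb : Disjoint Ra Lb) (dRaLc : Disjoint Ra Lc) (dRaQbc : Disjoint Ra Qbc)
    (dRaQca : Disjoint Ra Qca) (dRaQab : Disjoint Ra Qab)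
    (dRa : Disjoint Ra (segment ℝ b c))
    (dRbLc : Disjoint Rb Lc) (dRbLa : Disjoint Rb La) (dRbQ : Disjoint Rb Qca)
    (dRb : Disjoint Rb (segment ℝ c a))
    (dRcLa : Disjoint Rc La) (dRcLb : Disjoint Rc Lb) (dRcQ : Disjoint Rc Qab)
    (dRc : Disjoint Rc (segment ℝ a b))
    (dRab : Disjoint Rab (La ∪ Lc ∪ Qca ∪ segment ℝ c a))
    (dRca : Disjoint Rca (La ∪ Lb ∪ Qab ∪ segment ℝ a b))
    (oLa : La ∩ closedTri a b c ⊆ {a}) (oLb : Lb ∩ closedTri a b c ⊆ {b})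
    (oLc : Lc ∩ closedTri a b c ⊆ {c})
    (oQbc : Disjoint Qbc (closedTri a b c)) (oQca : Disjoint Qca (closedTri a b c))
    (oQab : Disjoint Qab (closedTri a b c)) (oR : ra ∉ closedTri a b c) : False := by
  set g := centroid3 a b c with hg
  have hb' : cr b c a ≠ 0 := by rwa [cr_rotate]
  have hc' : cr c a b ≠ 0 := by rwa [← cr_rotate]
  have w1 := winding_vertex h hEb hEc hFbc cRa ma ma' dRaLb dRaLc dRaQbc dRa oLb oLc oQbc
  have w2 := winding_vertex hb' hEc hEa hFca cRb mb mb' dRbLc dRbLa dRbQ dRb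
    (by rwa [closedTri_rotate]) (by rwa [closedTri_rotate]) (by rwa [closedTri_rotate])
  have w3 := winding_vertex hc' hEa hEb hFab cRc mc mc' dRcLa dRcLb dRcQ dRc
    (by rwa [← closedTri_rotate]) (by rwa [← closedTri_rotate]) (by rwa [← closedTri_rotate])
  rw [← hg] at w1
  rw [centroid3_rotate a b c, ← hg] at w2
  rw [← centroid3_rotate c a b, ← hg] at w3
  simp only [disjoint_union_right] at dRab dRca
  have v2 := winding_const hEc hEa hFca cRab dRab.1.1.2 dRab.1.1.1 dRab.1.2 dRab.2 mab mab'
  have v3 := winding_const hEa hEb hFab cRca dRca.1.1.1 dRca.1.1.2 dRca.1.2 dRca.2 mca' mca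
  have u1 := winding_const_triangle hFab hFbc hFca cRa dRaQab dRaQbc dRaQca ma' ma
  have hseg : ∀ z ∈ segment ℝ a g, z ∈ closedTri a b c := fun z hz =>
    (mem_segment_centroid h hz).1
  have u2 := winding_const_triangle hFab hFbc hFca (convex_segment a g).isPreconnected
    (disjoint_left.2 fun z hz hz' => disjoint_left.1 oQab hz' (hseg z hz))
    (disjoint_left.2 fun z hz hz' => disjoint_left.1 oQbc hz' (hseg z hz))
    (disjoint_left.2 fun z hz hz' => disjoint_left.1 oQca hz' (hseg z hz))
    (left_mem_segment _ _ _) (right_mem_segment _ _ _)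
  have t1 := sum_seenAngle_eq_zero h oR
  have t2 := sum_seenAngle_ne_zero h (centroid3_mem_openTri h)
  apply t2
  rw [← hg]
  linarith

/-! ### The stacked prism -/

/-- The stacked prism `C₃ × P_m`. The vertex `3 * i + j` with `j < 3` stands in row `i` and column
`j`; each row is a triangle, and equal columns of consecutive rows are joined. -/
def prismStack (m : ℕ) : SimpleGraph (Fin (3 * m)) where
  Adj u v := (u.val / 3 = v.val / 3 ∧ u ≠ v) ∨
    (u.val % 3 = v.val % 3 ∧ (u.val / 3 + 1 = v.val / 3 ∨ v.val / 3 + 1 = u.val / 3))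
  symm := ⟨fun u v h => by
    rcases h with h | h
    · exact .inl ⟨h.1.symm, h.2.symm⟩
    · exact .inr ⟨h.1.symm, h.2.symm⟩⟩
  loopless := ⟨fun u h => by
    rcases h with h | h
    · exact h.2 rfl
    · omega⟩

theorem prismStack_adj {m : ℕ} {u v : Fin (3 * m)} :
    (prismStack m).Adj u v ↔ (u.val / 3 = v.val / 3 ∧ u ≠ v) ∨
      (u.val % 3 = v.val % 3 ∧ (u.val / 3 + 1 = v.val / 3 ∨ v.val / 3 + 1 = u.val / 3)) :=
  Iff.rfl

theorem prismStack_maxDegLE (m : ℕ) : MaxDegLE (prismStack m) 4 := by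
  intro v
  rw [← ncard_image_of_injective _ Fin.val_injective]
  have hsub : Fin.val '' (prismStack m).neighborSet v ⊆
      (({v.val / 3 * 3 + (v.val + 1) % 3, v.val / 3 * 3 + (v.val + 2) % 3, v.val + 3,
        v.val - 3} : Finset ℕ) : Set ℕ) := by
    rintro _ ⟨u, hu, rfl⟩
    have hu : (prismStack m).Adj v u := hu
    rw [prismStack_adj, ne_eq, Fin.ext_iff] at hu
    simp only [Finset.coe_insert, Finset.coe_singleton, mem_insert_iff, mem_singleton_iff]
    omega
  refine (ncard_le_ncard hsub (Finset.finite_toSet _)).trans ?_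
  rw [ncard_coe_finset]
  exact Finset.card_le_four

theorem prismStack_triconnected {m : ℕ} (hm : 2 ≤ m) : Triconnected (prismStack m) := by
  refine ⟨by simp; omega, fun S hS => ?_⟩
  -- some column avoids `S`
  obtain ⟨c, hc3, hc⟩ : ∃ c < 3, ∀ v : Fin (3 * m), v.val % 3 = c → v ∉ S := by
    by_contra! hcon
    obtain ⟨x, hx, hxS⟩ := hcon 0 (by omega)
    obtain ⟨y, hy, hyS⟩ := hcon 1 (by omega)
    obtain ⟨z, hz, hzS⟩ := hcon 2 (by omega)
    have hxy : x ≠ y := by rintro rfl; omega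
    have hxz : x ≠ z := by rintro rfl; omega
    have hyz : y ≠ z := by rintro rfl; omega
    have h3 : ({x, y, z} : Set (Fin (3 * m))).ncard = 3 :=
      ncard_eq_three.2 ⟨x, y, z, hxy, hxz, hyz, rfl⟩
    have := ncard_le_ncard (s := {x, y, z}) (t := S)
      (by rintro w (rfl | rfl | rfl) <;> assumption) (toFinite _)
    omega
  -- the vertices of that column connect all rows
  have hcol : ∀ i (hi : i < m), (⟨3 * i + c, by omega⟩ : Fin (3 * m)) ∈ Sᶜ :=
    fun i hi => hc _ (by simp; omega)
  have hreach : ∀ i (hi : i < m), ((prismStack m).induce Sᶜ).Reachable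
      ⟨_, hcol 0 (by omega)⟩ ⟨_, hcol i hi⟩ := by
    intro i
    induction i with
    | zero => exact fun _ => SimpleGraph.Reachable.refl _
    | succ i ih =>
      intro hi
      refine (ih (by omega)).trans (SimpleGraph.Adj.reachable ?_)
      rw [SimpleGraph.induce_adj, prismStack_adj]
      right
      simp only
      omega
  have hall : ∀ v : (Sᶜ : Set (Fin (3 * m))), ((prismStack m).induce Sᶜ).Reachable
      ⟨_, hcol 0 (by omega)⟩ v := by
    rintro ⟨v, hv⟩
    have hvm : v.val / 3 < m := by omega
    by_cases h : v.val % 3 = c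
    · have : v = ⟨3 * (v.val / 3) + c, by omega⟩ := Fin.ext (by simp only; omega)
      convert hreach _ hvm
    · refine (hreach _ hvm).trans (SimpleGraph.Adj.reachable ?_)
      rw [SimpleGraph.induce_adj, prismStack_adj, ne_eq, Fin.ext_iff]
      left
      simp only
      omega
  have : Nonempty (Sᶜ : Set (Fin (3 * m))) := ⟨⟨_, hcol 0 (by omega)⟩⟩
  exact ⟨fun u v => (hall u).symm.trans (hall v)⟩

/-! ### A planar drawing of the stacked prism -/

/-- The polyline with a single segment between the endvertices of `e`, in an arbitrarily chosen
orientation. -/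
noncomputable def straightPoly {V : Type*} (pos : V → ℝ × ℝ) (e : Sym2 V) : Polyline where
  len := 1
  len_pos := le_rfl
  pt n := if n = 0 then pos (Quot.out e).1 else pos (Quot.out e).2

theorem straightPoly_cases {V : Type*} (pos : V → ℝ × ℝ) (u v : V) :
    ((straightPoly pos s(u, v)).pt 0 = pos u ∧ (straightPoly pos s(u, v)).pt 1 = pos v) ∨
    ((straightPoly pos s(u, v)).pt 0 = pos v ∧ (straightPoly pos s(u, v)).pt 1 = pos u) := by
  have h : s((Quot.out s(u, v)).1, (Quot.out s(u, v)).2) = s(u, v) := Quot.out_eq s(u, v)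
  rw [Sym2.eq_iff] at h
  simp only [straightPoly, if_true, one_ne_zero, if_false]
  rcases h with h | h
  · exact .inl ⟨by rw [h.1], by rw [h.2]⟩
  · exact .inr ⟨by rw [h.1], by rw [h.2]⟩

theorem straightPoly_image {V : Type*} (pos : V → ℝ × ℝ) (u v : V) :
    (straightPoly pos s(u, v)).image = segment ℝ (pos u) (pos v) := by
  rw [image_of_bends_eq_zero _ rfl]
  change segment ℝ ((straightPoly pos s(u, v)).pt 0) ((straightPoly pos s(u, v)).pt 1) = _
  rcases straightPoly_cases pos u v with h | h
  · rw [h.1, h.2]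
  · rw [h.1, h.2, segment_symm]

/-- `A 0`, `A 1`, `A 2` are the coordinates of `x` with respect to the complete fan spanned by
`(1, 0)`, `(0, 1)`, `(-1, -1)`: nonnegative coefficients, at least one of them zero. -/
structure Coords (A : ℕ → ℝ) (x : ℝ × ℝ) : Prop where
  nonneg : 0 ≤ A 0 ∧ 0 ≤ A 1 ∧ 0 ≤ A 2
  zero : A 0 = 0 ∨ A 1 = 0 ∨ A 2 = 0
  fst : x.1 = A 0 - A 2
  snd : x.2 = A 1 - A 2

theorem Coords.unique {A B : ℕ → ℝ} {x : ℝ × ℝ} (hA : Coords A x) (hB : Coords B x) :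
    ∀ k < 3, A k = B k := by
  obtain ⟨⟨a0, a1, a2⟩, az, af, as⟩ := hA
  obtain ⟨⟨b0, b1, b2⟩, bz, bf, bs⟩ := hB
  have h0 : A 0 = B 0 := by rcases az with h | h | h <;> rcases bz with h' | h' | h' <;> linarith
  intro k hk
  interval_cases k <;> linarith

/-- The stacked prism drawn as concentric triangles: row `i` is the triangle with vertices
`(i + 1) • (1, 0)`, `(i + 1) • (0, 1)`, `(i + 1) • (-1, -1)`. -/
noncomputable def gridPos (m : ℕ) (v : Fin (3 * m)) : ℝ × ℝ :=
  if v.val % 3 = 0 then ((v.val / 3 : ℕ) + 1, 0)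
  else if v.val % 3 = 1 then (0, (v.val / 3 : ℕ) + 1)
  else (-((v.val / 3 : ℕ) + 1), -((v.val / 3 : ℕ) + 1))

/-- A point of the segment between two vertices has nonzero coordinates only at the columns of
these vertices, and its coordinate sum, the level, lies between the levels of the two vertices. -/
theorem coords_segment {m : ℕ} {u v : Fin (3 * m)} {x : ℝ × ℝ}
    (hx : x ∈ segment ℝ (gridPos m u) (gridPos m v)) :
    ∃ A, Coords A x ∧ (∀ k < 3, k ≠ u.val % 3 → k ≠ v.val % 3 → A k = 0) ∧
      min ((u.val / 3 : ℕ) : ℝ) (v.val / 3 : ℕ) + 1 ≤ A 0 + A 1 + A 2 ∧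
      A 0 + A 1 + A 2 ≤ max ((u.val / 3 : ℕ) : ℝ) (v.val / 3 : ℕ) + 1 := by
  obtain ⟨s, t, hs, ht, hst, rfl⟩ := hx
  generalize hru : ((u.val / 3 : ℕ) : ℝ) = a
  generalize hrv : ((v.val / 3 : ℕ) : ℝ) = b
  have ha : 0 ≤ a := by rw [← hru]; positivity
  have hb : 0 ≤ b := by rw [← hrv]; positivity
  have hmin : min a b + 1 ≤ s * (a + 1) + t * (b + 1) := by
    have h1 := min_le_left a b
    have h2 := min_le_right a b
    obtain rfl : s = 1 - t := by linarith
    nlinarith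
  have hmax : s * (a + 1) + t * (b + 1) ≤ max a b + 1 := by
    have h1 := le_max_left a b
    have h2 := le_max_right a b
    obtain rfl : s = 1 - t := by linarith
    nlinarith
  have p1 : 0 ≤ s * (a + 1) := by positivity
  have p2 : 0 ≤ t * (b + 1) := by positivity
  refine ⟨fun k => (if k = u.val % 3 then s * (a + 1) else 0) +
    (if k = v.val % 3 then t * (b + 1) else 0), ?_, ?_, ?_⟩
  · have hu : u.val % 3 = 0 ∨ u.val % 3 = 1 ∨ u.val % 3 = 2 := by omega
    have hv : v.val % 3 = 0 ∨ v.val % 3 = 1 ∨ v.val % 3 = 2 := by omega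
    rcases hu with hu | hu | hu <;> rcases hv with hv | hv | hv <;>
    · constructor <;> simp [gridPos, hu, hv, hru, hrv, p1, p2, add_nonneg] <;> ring
  · intro k _ h1 h2
    simp [h1, h2]
  · have e : (∑ k ∈ Finset.range 3, ((if k = u.val % 3 then s * (a + 1) else 0) +
        (if k = v.val % 3 then t * (b + 1) else 0))) = s * (a + 1) + t * (b + 1) := by
      rw [Finset.sum_add_distrib, Finset.sum_ite_eq', Finset.sum_ite_eq',
        if_pos (Finset.mem_range.2 (by omega)), if_pos (Finset.mem_range.2 (by omega))]
    simp only [Finset.sum_range_succ, Finset.sum_range_zero, zero_add] at e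
    exact ⟨by linarith, by linarith⟩

theorem eq_gridPos {m : ℕ} {w : Fin (3 * m)} {A : ℕ → ℝ} {x : ℝ × ℝ} (hA : Coords A x)
    (h0 : ∀ k < 3, k ≠ w.val % 3 → A k = 0) (hs : A 0 + A 1 + A 2 = (w.val / 3 : ℕ) + 1) :
    x = gridPos m w := by
  have h00 := h0 0 (by omega)
  have h01 := h0 1 (by omega)
  have h02 := h0 2 (by omega)
  obtain ⟨-, -, hf, hsn⟩ := hA
  have hw : w.val % 3 = 0 ∨ w.val % 3 = 1 ∨ w.val % 3 = 2 := by omega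
  rcases hw with hw | hw | hw <;> simp [hw] at h00 h01 h02 <;> ext <;>
    simp [gridPos, hw] <;> linarith

/-- Two edges at a common vertex meet only there. -/
theorem gridPos_shared {m : ℕ} {u v v' : Fin (3 * m)} (h : (prismStack m).Adj u v)
    (h' : (prismStack m).Adj u v') (hne : v ≠ v') {x : ℝ × ℝ}
    (hx : x ∈ segment ℝ (gridPos m u) (gridPos m v))
    (hx' : x ∈ segment ℝ (gridPos m u) (gridPos m v')) : x = gridPos m u := by
  obtain ⟨A, hA, hA0, hA1, hA2⟩ := coords_segment hx
  obtain ⟨B, hB, hB0, hB1, hB2⟩ := coords_segment hx'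
  have hAB := hA.unique hB
  have e0 := hAB 0 (by omega)
  have e1 := hAB 1 (by omega)
  have e2 := hAB 2 (by omega)
  rw [prismStack_adj, ne_eq, Fin.ext_iff] at h h'
  rw [ne_eq, Fin.ext_iff] at hne
  refine eq_gridPos hA (fun k hk hku => ?_) ?_
  · by_cases hkv : k = v.val % 3
    · rw [hAB k hk]
      exact hB0 k hk hku (by omega)
    · exact hA0 k hk hku hkv
  · rcases h with h | ⟨h, h1 | h1⟩
    · rw [← h.1, min_self] at hA1
      rw [← h.1, max_self] at hA2
      linarith
    · rcases h' with h' | ⟨h', h1' | h1'⟩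
      · rw [← h'.1, min_self] at hB1
        rw [← h'.1, max_self] at hB2
        linarith
      · omega
      · rw [← h1] at hA1 hA2
        rw [← h1'] at hB1 hB2 ⊢
        push_cast at *
        rw [← h1'] at hA1
        push_cast at *
        rw [min_eq_left (by linarith)] at hA1
        rw [max_eq_left (by linarith)] at hB2
        linarith
    · rcases h' with h' | ⟨h', h1' | h1'⟩
      · rw [← h'.1, min_self] at hB1
        rw [← h'.1, max_self] at hB2
        linarith
      · rw [← h1'] at hB1
        rw [← h1] at hA2 hB1 ⊢
        push_cast at *
        rw [min_eq_left (by linarith)] at hB1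
        rw [max_eq_left (by linarith)] at hA2
        linarith
      · omega

/-- Edges without common endpoints are drawn disjointly. -/
theorem gridPos_disjoint {m : ℕ} {u v u' v' : Fin (3 * m)} (h : (prismStack m).Adj u v)
    (h' : (prismStack m).Adj u' v') (h1 : u ≠ u') (h2 : u ≠ v') (h3 : v ≠ u') (h4 : v ≠ v')
    {x : ℝ × ℝ} (hx : x ∈ segment ℝ (gridPos m u) (gridPos m v))
    (hx' : x ∈ segment ℝ (gridPos m u') (gridPos m v')) : False := by
  obtain ⟨A, hA, hA0, hA1, hA2⟩ := coords_segment hx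
  obtain ⟨B, hB, hB0, hB1, hB2⟩ := coords_segment hx'
  have hAB := hA.unique hB
  have e0 := hAB 0 (by omega)
  have e1 := hAB 1 (by omega)
  have e2 := hAB 2 (by omega)
  rw [prismStack_adj, ne_eq, Fin.ext_iff] at h h'
  rw [ne_eq, Fin.ext_iff] at h1 h2 h3 h4
  have hpos : 0 < A 0 + A 1 + A 2 := by
    have : (0 : ℝ) ≤ min ((u.val / 3 : ℕ) : ℝ) (v.val / 3 : ℕ) := by positivity
    linarith
  -- the levels of the two edges overlap
  have o1 : min (u.val / 3) (v.val / 3) ≤ max (u'.val / 3) (v'.val / 3) := by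
    have : min ((u.val / 3 : ℕ) : ℝ) (v.val / 3 : ℕ) ≤
      max ((u'.val / 3 : ℕ) : ℝ) (v'.val / 3 : ℕ) := by linarith
    exact_mod_cast this
  have o2 : min (u'.val / 3) (v'.val / 3) ≤ max (u.val / 3) (v.val / 3) := by
    have : min ((u'.val / 3 : ℕ) : ℝ) (v'.val / 3 : ℕ) ≤
      max ((u.val / 3 : ℕ) : ℝ) (v.val / 3 : ℕ) := by linarith
    exact_mod_cast this
  have hz : ∀ k < 3, A k = 0 := by
    intro k hk
    by_cases hk1 : k ≠ u.val % 3 ∧ k ≠ v.val % 3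
    · exact hA0 k hk hk1.1 hk1.2
    · rw [hAB k hk]
      refine hB0 k hk ?_ ?_ <;> omega
  have z0 := hz 0 (by omega)
  have z1 := hz 1 (by omega)
  have z2 := hz 2 (by omega)
  linarith

theorem gridPos_injective (m : ℕ) : Function.Injective (gridPos m) := by
  intro u v huv
  obtain ⟨A, hA, hA0, hA1, hA2⟩ := coords_segment (left_mem_segment ℝ (gridPos m u) (gridPos m u))
  obtain ⟨B, hB, hB0, hB1, hB2⟩ := coords_segment (left_mem_segment ℝ (gridPos m v) (gridPos m v))
  rw [huv] at hA
  have hAB := hA.unique hB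
  have e0 := hAB 0 (by omega)
  have e1 := hAB 1 (by omega)
  have e2 := hAB 2 (by omega)
  rw [min_self] at hA1 hB1
  rw [max_self] at hA2 hB2
  have hrow : u.val / 3 = v.val / 3 := by
    have : ((u.val / 3 : ℕ) : ℝ) = (v.val / 3 : ℕ) := by linarith
    exact_mod_cast this
  have hcol : u.val % 3 = v.val % 3 := by
    by_contra hne
    have hz : ∀ k < 3, A k = 0 := by
      intro k hk
      by_cases hk1 : k = u.val % 3
      · rw [hAB k hk]
        exact hB0 k hk (by omega) (by omega)
      · exact hA0 k hk hk1 hk1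
    have z0 := hz 0 (by omega)
    have z1 := hz 1 (by omega)
    have z2 := hz 2 (by omega)
    have : (0 : ℝ) ≤ (u.val / 3 : ℕ) := by positivity
    linarith
  exact Fin.ext (by omega)

theorem prismStack_edges_meet {m : ℕ} {u v u' v' : Fin (3 * m)} (h : (prismStack m).Adj u v)
    (h' : (prismStack m).Adj u' v') (hne : s(u, v) ≠ s(u', v')) {x : ℝ × ℝ}
    (hx : x ∈ segment ℝ (gridPos m u) (gridPos m v))
    (hx' : x ∈ segment ℝ (gridPos m u') (gridPos m v')) :
    ∃ w, (w ∈ s(u, v) ∧ w ∈ s(u', v')) ∧ gridPos m w = x := by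
  simp only [Sym2.mem_iff]
  rw [ne_eq, Sym2.eq_iff] at hne
  by_cases h1 : u = u'
  · subst h1
    exact ⟨u, by simp, (gridPos_shared h h' (by tauto) hx hx').symm⟩
  by_cases h2 : u = v'
  · subst h2
    rw [segment_symm] at hx'
    exact ⟨u, by simp, (gridPos_shared h h'.symm (by tauto) hx hx').symm⟩
  by_cases h3 : v = u'
  · subst h3
    rw [segment_symm] at hx
    exact ⟨v, by simp, (gridPos_shared h.symm h' (by tauto) hx hx').symm⟩
  by_cases h4 : v = v'
  · subst h4
    rw [segment_symm] at hx hx'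
    exact ⟨v, by simp, (gridPos_shared h.symm h'.symm (by tauto) hx hx').symm⟩
  exact (gridPos_disjoint h h' h1 h2 h3 h4 hx hx').elim

theorem prismStack_vertex_on_edge {m : ℕ} {u v w : Fin (3 * m)} (h : (prismStack m).Adj u v)
    (hw : gridPos m w ∈ segment ℝ (gridPos m u) (gridPos m v)) : w = u ∨ w = v := by
  by_contra! hne
  -- an edge at `w` within its row
  obtain ⟨w', hw'⟩ : ∃ w', (prismStack m).Adj w w' := by
    refine ⟨⟨w.val / 3 * 3 + (w.val + 1) % 3, by omega⟩, ?_⟩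
    rw [prismStack_adj, ne_eq, Fin.ext_iff]
    left
    simp only
    omega
  obtain ⟨x, ⟨hx1, hx2⟩, hx3⟩ := prismStack_edges_meet h hw' (by
    rw [ne_eq, Sym2.eq_iff]
    rintro (⟨rfl, rfl⟩ | ⟨rfl, rfl⟩)
    · exact hne.1 rfl
    · exact hne.2 rfl) hw (left_mem_segment _ _ _)
  rw [gridPos_injective m hx3, Sym2.mem_iff] at hx1
  tauto

theorem prismStack_planar (m : ℕ) : GraphPlanar (prismStack m) := by
  refine ⟨{ pos := gridPos m, inj := gridPos_injective m, poly := straightPoly (gridPos m),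
            ends := ?_, proper := ?_ }, ?_, ?_, ?_⟩
  · intro u v _
    change ({(straightPoly (gridPos m) s(u, v)).pt 0,
      (straightPoly (gridPos m) s(u, v)).pt 1} : Set (ℝ × ℝ)) = _
    rcases straightPoly_cases (gridPos m) u v with h | h
    · rw [h.1, h.2]
    · rw [h.1, h.2, pair_comm]
  · intro e
    induction e using Sym2.ind with
    | _ u v =>
      intro he
      have hadj : (prismStack m).Adj u v := he
      have hne : gridPos m u ≠ gridPos m v := (gridPos_injective m).ne hadj.ne
      refine ⟨fun i hi => ?_, fun i hi => ?_⟩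
      · have hi : i < 1 := hi
        obtain rfl : i = 0 := by omega
        rcases straightPoly_cases (gridPos m) u v with h | h
        · rw [h.1, h.2]; exact hne
        · rw [h.1, h.2]; exact hne.symm
      · have hi : i + 1 < 1 := hi
        omega
  · intro e
    induction e using Sym2.ind with
    | _ u v =>
      intro he
      have hadj : (prismStack m).Adj u v := he
      have hne : gridPos m u ≠ gridPos m v := (gridPos_injective m).ne hadj.ne
      have hne' : (straightPoly (gridPos m) s(u, v)).pt 0 ≠
          (straightPoly (gridPos m) s(u, v)).pt 1 := by
        rcases straightPoly_cases (gridPos m) u v with h | h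
        · rw [h.1, h.2]; exact hne
        · rw [h.1, h.2]; exact hne.symm
      intro s hs t ht hst
      have hs : s ∈ Icc ((0 : ℕ) : ℝ) ((0 : ℕ) + 1) := by simpa [straightPoly] using hs
      have ht : t ∈ Icc ((0 : ℕ) : ℝ) ((0 : ℕ) + 1) := by simpa [straightPoly] using ht
      change (straightPoly (gridPos m) s(u, v)).param s =
        (straightPoly (gridPos m) s(u, v)).param t at hst
      rw [param_eq _ 0 hs, param_eq _ 0 ht] at hst
      simpa using AffineMap.lineMap_injective ℝ hne' hst
  · intro u v hadj
    change (straightPoly (gridPos m) s(u, v)).image ∩ range (gridPos m) = _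
    rw [straightPoly_image]
    ext x
    constructor
    · rintro ⟨hx, w, rfl⟩
      rcases prismStack_vertex_on_edge hadj hx with rfl | rfl
      · exact .inl rfl
      · exact .inr rfl
    · rintro (rfl | rfl)
      · exact ⟨left_mem_segment _ _ _, mem_range_self _⟩
      · exact ⟨right_mem_segment _ _ _, mem_range_self _⟩
  · intro e
    induction e using Sym2.ind with
    | _ u v =>
      intro he e'
      induction e' using Sym2.ind with
      | _ u' v' =>
        intro he' hne
        change (straightPoly (gridPos m) s(u, v)).image ∩
          (straightPoly (gridPos m) s(u', v')).image ⊆ _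
        rw [straightPoly_image, straightPoly_image]
        rintro x ⟨hx, hx'⟩
        exact prismStack_edges_meet he he' hne hx hx'

/-! ### Edges of a planar octilinear drawing -/

section Drawing

variable {V : Type*} {G : SimpleGraph V} {D : OctiDrawing G}

namespace OctiDrawing

/-- The point of the real plane representing the vertex `w`. -/
def rpos (D : OctiDrawing G) (w : V) : ℝ × ℝ := toR (D.pos w)

/-- The trace of the polyline drawn for the pair `{u, v}`. -/
noncomputable def curve (D : OctiDrawing G) (u v : V) : Set (ℝ × ℝ) := (D.poly s(u, v)).image

theorem curve_comm (D : OctiDrawing G) (u v : V) : D.curve u v = D.curve v u := by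
  rw [curve, curve, Sym2.eq_swap]

theorem rpos_injective (D : OctiDrawing G) : Function.Injective D.rpos := by
  intro u v h
  apply D.inj
  simp only [rpos, toR, Prod.mk.injEq, Int.cast_inj] at h
  exact Prod.ext h.1 h.2

theorem isPreconnected_curve (D : OctiDrawing G) (u v : V) : IsPreconnected (D.curve u v) :=
  Polyline.isPreconnected_image _

theorem ends_cases {u v : V} (h : G.Adj u v) :
    ((D.poly s(u, v)).pt 0 = D.rpos u ∧ (D.poly s(u, v)).pt (D.poly s(u, v)).len = D.rpos v) ∨
    ((D.poly s(u, v)).pt 0 = D.rpos v ∧ (D.poly s(u, v)).pt (D.poly s(u, v)).len = D.rpos u) :=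
  Set.pair_eq_pair_iff.1 (D.ends u v h)

theorem left_mem_curve {u v : V} (h : G.Adj u v) : D.rpos u ∈ D.curve u v := by
  rcases ends_cases (D := D) h with ⟨h1, -⟩ | ⟨-, h1⟩
  · rw [← h1]; exact Polyline.pt_zero_mem _
  · rw [← h1]; exact Polyline.pt_len_mem _

theorem right_mem_curve {u v : V} (h : G.Adj u v) : D.rpos v ∈ D.curve u v := by
  rw [curve_comm]; exact left_mem_curve h.symm

theorem exists_isSweep {u v : V} (h : G.Adj u v) :
    ∃ E, IsSweep (D.curve u v) (D.rpos u) (D.rpos v) E := by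
  obtain ⟨E, hE⟩ := (D.poly s(u, v)).exists_isSweep
  rcases ends_cases (D := D) h with ⟨h1, h2⟩ | ⟨h1, h2⟩
  · rw [h1, h2] at hE; exact ⟨E, hE⟩
  · rw [h1, h2] at hE; exact ⟨_, hE.neg⟩

theorem curve_eq_segment {u v : V} (h : G.Adj u v) (hb : (D.poly s(u, v)).bends = 0) :
    D.curve u v = segment ℝ (D.rpos u) (D.rpos v) := by
  rw [curve, Polyline.image_of_bends_eq_zero _ hb]
  rcases ends_cases (D := D) h with ⟨h1, h2⟩ | ⟨h1, h2⟩
  · rw [h1, h2]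
  · rw [h1, h2, segment_symm]

theorem octiSeg_of_bends {u v : V} (h : G.Adj u v) (hb : (D.poly s(u, v)).bends = 0) :
    OctiSeg (D.rpos u) (D.rpos v) := by
  have h0 := (D.octi _ h).2 0 (D.poly s(u, v)).len_pos
  have hl : (D.poly s(u, v)).len = 0 + 1 := by
    have := (D.poly s(u, v)).len_pos
    unfold Polyline.bends at hb
    omega
  rw [← hl] at h0
  rcases ends_cases (D := D) h with ⟨h1, h2⟩ | ⟨h1, h2⟩
  · rwa [h1, h2] at h0
  · rw [h1, h2] at h0; exact h0.symm

namespace IsPlanar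

theorem exists_first_segment (hD : D.IsPlanar) {u v : V} (h : G.Adj u v) :
    ∃ q, q ≠ D.rpos u ∧ OctiSeg (D.rpos u) q ∧ segment ℝ (D.rpos u) q ⊆ D.curve u v ∧
      IsPreconnected (D.curve u v \ {D.rpos u}) := by
  apply Polyline.exists_first_segment _ (hD.1 _ h) (D.octi _ h)
  rcases ends_cases (D := D) h with ⟨h1, -⟩ | ⟨-, h1⟩
  · exact .inl h1.symm
  · exact .inr h1.symm

theorem notMem_curve (hD : D.IsPlanar) {u v w : V} (h : G.Adj u v) (hu : w ≠ u) (hv : w ≠ v) :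
    D.rpos w ∉ D.curve u v := by
  intro hw
  have h1 : D.rpos w ∈ ({D.rpos u, D.rpos v} : Set (ℝ × ℝ)) := by
    have h0 := hD.2.1 u v h
    simp only [rpos, ← h0]
    exact ⟨hw, w, rfl⟩
  rcases h1 with h1 | h1
  · exact hu (D.rpos_injective h1)
  · exact hv (D.rpos_injective h1)

theorem disjoint_curve (hD : D.IsPlanar) {u v u' v' : V} (h : G.Adj u v) (h' : G.Adj u' v')
    (h1 : u ≠ u') (h2 : u ≠ v') (h3 : v ≠ u') (h4 : v ≠ v') : Disjoint (D.curve u v) (D.curve u' v') := by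
  rw [disjoint_left]
  intro z hz hz'
  have hne : s(u, v) ≠ s(u', v') := by
    intro he
    rw [Sym2.eq_iff] at he
    tauto
  obtain ⟨w, ⟨hw, hw'⟩, -⟩ := hD.2.2 _ h _ h' hne ⟨hz, hz'⟩
  rw [Sym2.mem_iff] at hw hw'
  rcases hw with rfl | rfl <;> rcases hw' with rfl | rfl <;> contradiction

theorem inter_curve (hD : D.IsPlanar) {u v v' : V} (h : G.Adj u v) (h' : G.Adj u v') (h1 : v ≠ v') :
    D.curve u v ∩ D.curve u v' ⊆ {D.rpos u} := by
  rintro z hz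
  have hne : s(u, v) ≠ s(u, v') := by
    intro he
    rw [Sym2.eq_iff] at he
    rcases he with he | he
    · exact h1 he.2
    · exact h1 (he.2.trans he.1)
  obtain ⟨w, ⟨hw, hw'⟩, rfl⟩ := hD.2.2 _ h _ h' hne hz
  rw [Sym2.mem_iff] at hw hw'
  rcases hw with rfl | rfl
  · rfl
  · rcases hw' with rfl | rfl
    · rfl
    · contradiction

end IsPlanar

end OctiDrawing

open OctiDrawing

/-- Three points on a line: one of them lies between the two others. -/
theorem mem_segment_of_cr_eq_zero {a b c : ℝ × ℝ} (h : cr a b c = 0) :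
    b ∈ segment ℝ a c ∨ c ∈ segment ℝ b a ∨ a ∈ segment ℝ c b := by
  have hcol : Collinear ℝ ({a, b, c} : Set (ℝ × ℝ)) := by
    by_cases hab : b = a
    · subst hab
      simpa using collinear_pair ℝ b c
    rw [collinear_iff_of_mem (p₀ := a) (by simp)]
    refine ⟨b - a, ?_⟩
    intro p hp
    simp only [mem_insert_iff, mem_singleton_iff] at hp
    rcases hp with rfl | rfl | rfl
    · exact ⟨0, by simp⟩
    · exact ⟨1, by simp⟩
    · have hn : (b.1 - a.1) ^ 2 + (b.2 - a.2) ^ 2 ≠ 0 := by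
        intro h0
        apply hab
        have h1 : b.1 - a.1 = 0 := by nlinarith [sq_nonneg (b.1 - a.1), sq_nonneg (b.2 - a.2)]
        have h2 : b.2 - a.2 = 0 := by nlinarith [sq_nonneg (b.1 - a.1), sq_nonneg (b.2 - a.2)]
        exact Prod.ext (by linarith) (by linarith)
      refine ⟨((b.1 - a.1) * (p.1 - a.1) + (b.2 - a.2) * (p.2 - a.2)) /
        ((b.1 - a.1) ^ 2 + (b.2 - a.2) ^ 2), ?_⟩
      unfold cr at h
      ext
      · simp only [vadd_eq_add, Prod.fst_add, Prod.smul_fst, Prod.fst_sub, smul_eq_mul]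
        field_simp
        linear_combination -(b.2 - a.2) * h
      · simp only [vadd_eq_add, Prod.snd_add, Prod.smul_snd, Prod.snd_sub, smul_eq_mul]
        field_simp
        linear_combination (b.1 - a.1) * h
  rcases hcol.wbtw_or_wbtw_or_wbtw with h | h | h
  · exact .inl (mem_segment_iff_wbtw.2 h)
  · exact .inr (.inl (mem_segment_iff_wbtw.2 h))
  · exact .inr (.inr (mem_segment_iff_wbtw.2 h))

/-- The boundary of the triangle `a b c`. -/
def triBoundary (a b c : ℝ × ℝ) : Set (ℝ × ℝ) := segment ℝ a b ∪ segment ℝ b c ∪ segment ℝ c a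

theorem triBoundary_rotate (a b c : ℝ × ℝ) : triBoundary b c a = triBoundary a b c := by
  unfold triBoundary
  ext z
  simp only [mem_union]
  tauto

theorem openTri_subset_closedTri (a b c : ℝ × ℝ) : openTri a b c ⊆ closedTri a b c :=
  fun z hz => by
    simp only [openTri, closedTri] at *
    exact ⟨hz.1.le, hz.2.1.le, hz.2.2.le⟩

theorem subset_openTri {a b c : ℝ × ℝ} (h : cr a b c ≠ 0) {S : Set (ℝ × ℝ)}
    (hS : IsPreconnected S) (hd : Disjoint S (triBoundary a b c)) {x : ℝ × ℝ} (hx : x ∈ S)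
    (hx' : x ∈ openTri a b c) : S ⊆ openTri a b c := by
  rcases subset_openTri_or_compl h hS hd with h1 | h1
  · exact h1
  · exact absurd (openTri_subset_closedTri _ _ _ hx') (h1 hx)

theorem subset_compl_closedTri {a b c : ℝ × ℝ} (h : cr a b c ≠ 0) {S : Set (ℝ × ℝ)}
    (hS : IsPreconnected S) (hd : Disjoint S (triBoundary a b c)) {x : ℝ × ℝ} (hx : x ∈ S)
    (hx' : x ∉ closedTri a b c) : S ⊆ (closedTri a b c)ᶜ := by
  rcases subset_openTri_or_compl h hS hd with h1 | h1
  · exact absurd (openTri_subset_closedTri _ _ _ (h1 hx)) hx'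
  · exact h1

/-- A triangle of the graph whose three edges are drawn without bends. -/
structure StraightTriangle (D : OctiDrawing G) (u : Fin 3 → V) : Prop where
  adj : ∀ j k, j ≠ k → G.Adj (u j) (u k)
  straight : ∀ j k, j ≠ k → (D.poly s(u j, u k)).bends = 0

namespace StraightTriangle

variable {u v w : Fin 3 → V}

theorem curve_eq (hu : StraightTriangle D u) (j k : Fin 3) (h : j ≠ k) :
    D.curve (u j) (u k) = segment ℝ (D.rpos (u j)) (D.rpos (u k)) :=
  curve_eq_segment (hu.adj j k h) (hu.straight j k h)

theorem boundary_eq (hu : StraightTriangle D u) :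
    triBoundary (D.rpos (u 0)) (D.rpos (u 1)) (D.rpos (u 2)) =
      D.curve (u 0) (u 1) ∪ D.curve (u 1) (u 2) ∪ D.curve (u 2) (u 0) := by
  rw [triBoundary, hu.curve_eq 0 1 (by decide), hu.curve_eq 1 2 (by decide),
    hu.curve_eq 2 0 (by decide)]

theorem rotate (hu : StraightTriangle D u) : StraightTriangle D (fun j => u (j + 1)) where
  adj j k h := hu.adj _ _ (by simpa using h)
  straight j k h := hu.straight _ _ (by simpa using h)

theorem cr_ne_zero (hu : StraightTriangle D u) (hD : D.IsPlanar) :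
    cr (D.rpos (u 0)) (D.rpos (u 1)) (D.rpos (u 2)) ≠ 0 := by
  intro h
  have key : ∀ j k l : Fin 3, j ≠ k → k ≠ l → j ≠ l →
      D.rpos (u k) ∉ segment ℝ (D.rpos (u j)) (D.rpos (u l)) := by
    intro j k l h1 h2 h3
    rw [← hu.curve_eq j l h3]
    exact hD.notMem_curve (hu.adj j l h3) (hu.adj k j h1.symm).ne (hu.adj k l h2).ne
  rcases mem_segment_of_cr_eq_zero h with h | h | h
  · exact key 0 1 2 (by decide) (by decide) (by decide) h
  · exact key 1 2 0 (by decide) (by decide) (by decide) h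
  · exact key 2 0 1 (by decide) (by decide) (by decide) h

/-- An edge disjoint from the triangle is drawn away from its boundary. -/
theorem disjoint_boundary (hu : StraightTriangle D u) (hD : D.IsPlanar) {x y : V}
    (h : G.Adj x y) (hx : ∀ j, x ≠ u j) (hy : ∀ j, y ≠ u j) :
    Disjoint (D.curve x y) (triBoundary (D.rpos (u 0)) (D.rpos (u 1)) (D.rpos (u 2))) := by
  rw [hu.boundary_eq, disjoint_union_right, disjoint_union_right]
  refine ⟨⟨?_, ?_⟩, ?_⟩
  all_goals exact hD.disjoint_curve h (hu.adj _ _ (by decide)) (hx _) (hx _) (hy _) (hy _)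

/-- An edge leaving the triangle at `u 0` meets its boundary there only. -/
theorem leg_inter (hu : StraightTriangle D u) (hD : D.IsPlanar) {y : V}
    (h : G.Adj (u 0) y) (hy : ∀ j, y ≠ u j) :
    D.curve (u 0) y ∩ triBoundary (D.rpos (u 0)) (D.rpos (u 1)) (D.rpos (u 2)) ⊆
      {D.rpos (u 0)} := by
  rw [hu.boundary_eq]
  rintro z ⟨hz, (hz' | hz') | hz'⟩
  · exact hD.inter_curve h (hu.adj 0 1 (by decide)) (hy 1) ⟨hz, hz'⟩
  · exact absurd hz' (disjoint_left.1 (hD.disjoint_curve h (hu.adj 1 2 (by decide))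
      (hu.adj 0 1 (by decide)).ne (hu.adj 0 2 (by decide)).ne (hy _) (hy _)) hz)
  · rw [curve_comm] at hz'
    exact hD.inter_curve h (hu.adj 0 2 (by decide)) (hy 2) ⟨hz, hz'⟩

/-- At a vertex `u 0` of a straight octilinear triangle where the angle is not right, it is `45°`,
so that an edge to a vertex `y` not in the triangle leads to the outside. -/
theorem leg_outside (hu : StraightTriangle D u) (hD : D.IsPlanar) {y : V}
    (h : G.Adj (u 0) y) (hy : ∀ j, y ≠ u j)
    (hdot : ((D.rpos (u 1)).1 - (D.rpos (u 0)).1) * ((D.rpos (u 2)).1 - (D.rpos (u 0)).1) +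
      ((D.rpos (u 1)).2 - (D.rpos (u 0)).2) * ((D.rpos (u 2)).2 - (D.rpos (u 0)).2) ≠ 0) :
    D.rpos y ∉ closedTri (D.rpos (u 0)) (D.rpos (u 1)) (D.rpos (u 2)) := by
  obtain ⟨q, hq, ho, hs, hc⟩ := hD.exists_first_segment h
  have := leg_subset_compl (hu.cr_ne_zero hD)
    (octiSeg_of_bends (hu.adj 0 1 (by decide)) (hu.straight 0 1 (by decide)))
    (octiSeg_of_bends (hu.adj 0 2 (by decide)) (hu.straight 0 2 (by decide)))
    (octiSeg_of_bends (hu.adj 1 2 (by decide)) (hu.straight 1 2 (by decide)))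
    hdot hq ho hs hc (hu.leg_inter hD h hy)
  exact this ⟨right_mem_curve h, fun h0 => h.ne (D.rpos_injective h0).symm⟩

/-- A triangle has at most one right angle, so that some leg to the neighbouring triangle `v`
leaves to the outside. -/
theorem exists_outside (hu : StraightTriangle D u) (hD : D.IsPlanar)
    (hleg : ∀ j, G.Adj (u j) (v j)) (hne : ∀ j k, v j ≠ u k) :
    ∃ j, D.rpos (v j) ∉ closedTri (D.rpos (u 0)) (D.rpos (u 1)) (D.rpos (u 2)) := by
  by_cases hdot : ((D.rpos (u 1)).1 - (D.rpos (u 0)).1) * ((D.rpos (u 2)).1 - (D.rpos (u 0)).1) +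
      ((D.rpos (u 1)).2 - (D.rpos (u 0)).2) * ((D.rpos (u 2)).2 - (D.rpos (u 0)).2) = 0
  · refine ⟨1, ?_⟩
    have := hu.rotate.leg_outside hD (y := v 1) (hleg 1) (fun j => hne _ _) (by
      simp only [Fin.isValue, zero_add, show (1 : Fin 3) + 1 = 2 from rfl,
        show (2 : Fin 3) + 1 = 0 from rfl]
      intro h0
      apply (hu.adj 0 1 (by decide)).ne
      apply D.rpos_injective
      have hs : ((D.rpos (u 1)).1 - (D.rpos (u 0)).1) ^ 2 +
          ((D.rpos (u 1)).2 - (D.rpos (u 0)).2) ^ 2 = 0 := by linarith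
      have h1 : (D.rpos (u 1)).1 - (D.rpos (u 0)).1 = 0 := by
        nlinarith [sq_nonneg ((D.rpos (u 1)).1 - (D.rpos (u 0)).1),
          sq_nonneg ((D.rpos (u 1)).2 - (D.rpos (u 0)).2)]
      have h2 : (D.rpos (u 1)).2 - (D.rpos (u 0)).2 = 0 := by
        nlinarith [sq_nonneg ((D.rpos (u 1)).1 - (D.rpos (u 0)).1),
          sq_nonneg ((D.rpos (u 1)).2 - (D.rpos (u 0)).2)]
      exact Prod.ext (by linarith) (by linarith))
    simpa only [Fin.isValue, zero_add, show (1 : Fin 3) + 1 = 2 from rfl,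
        show (2 : Fin 3) + 1 = 0 from rfl, closedTri_rotate] using this
  · exact ⟨0, hu.leg_outside hD (hleg 0) (hne 0) hdot⟩

/-- If one vertex of the triangle `v` lies outside, then so do its edges. -/
theorem all_outside (hu : StraightTriangle D u) (hD : D.IsPlanar)
    (hv : ∀ j k, j ≠ k → G.Adj (v j) (v k)) (hne : ∀ j k, v j ≠ u k) {j : Fin 3}
    (hj : D.rpos (v j) ∉ closedTri (D.rpos (u 0)) (D.rpos (u 1)) (D.rpos (u 2))) (k l : Fin 3)
    (hkl : k ≠ l) :
    D.curve (v k) (v l) ⊆ (closedTri (D.rpos (u 0)) (D.rpos (u 1)) (D.rpos (u 2)))ᶜ := by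
  have key : ∀ k, D.rpos (v k) ∉ closedTri (D.rpos (u 0)) (D.rpos (u 1)) (D.rpos (u 2)) := by
    intro k
    by_cases h : j = k
    · exact h ▸ hj
    · exact subset_compl_closedTri (hu.cr_ne_zero hD) (D.isPreconnected_curve (v j) (v k))
        (hu.disjoint_boundary hD (hv j k h) (hne _) (hne _)) (left_mem_curve (hv j k h)) hj
        (right_mem_curve (hv j k h))
  exact subset_compl_closedTri (hu.cr_ne_zero hD) (D.isPreconnected_curve (v k) (v l))
    (hu.disjoint_boundary hD (hv k l hkl) (hne _) (hne _)) (left_mem_curve (hv k l hkl)) (key k)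

theorem leg_all_outside (hu : StraightTriangle D u) (hD : D.IsPlanar) {y : V}
    (h : G.Adj (u 0) y) (hy : ∀ j, y ≠ u j)
    (ho : D.rpos y ∉ closedTri (D.rpos (u 0)) (D.rpos (u 1)) (D.rpos (u 2))) :
    D.curve (u 0) y ∩ closedTri (D.rpos (u 0)) (D.rpos (u 1)) (D.rpos (u 2)) ⊆
      {D.rpos (u 0)} := by
  obtain ⟨q, hq, -, hs, hc⟩ := hD.exists_first_segment h
  have := subset_compl_closedTri (hu.cr_ne_zero hD) hc
    (disjoint_left.2 fun z hz hz' => hz.2 (hu.leg_inter hD h hy ⟨hz.1, hz'⟩))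
    ⟨right_mem_curve h, fun h0 => h.ne (D.rpos_injective h0).symm⟩ ho
  rintro z ⟨hz, hz'⟩
  by_contra h0
  exact this ⟨hz, h0⟩ hz'

/-- If `u` is drawn straight and both `v` and `w` are triangles joined to `u` by three legs, then
the triangle `w` is drawn inside `u` as soon as `v` is drawn outside. -/
theorem pred_inside (hu : StraightTriangle D u) (hD : D.IsPlanar)
    (hv : ∀ j k, j ≠ k → G.Adj (v j) (v k)) (hw : ∀ j k, j ≠ k → G.Adj (w j) (w k))
    (huv : ∀ j, G.Adj (u j) (v j)) (huw : ∀ j, G.Adj (u j) (w j))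
    (nvu : ∀ j k, v j ≠ u k) (nwu : ∀ j k, w j ≠ u k) (nvw : ∀ j k, v j ≠ w k)
    (hout : D.rpos (v 0) ∉ closedTri (D.rpos (u 0)) (D.rpos (u 1)) (D.rpos (u 2))) :
    D.rpos (w 0) ∈ openTri (D.rpos (u 0)) (D.rpos (u 1)) (D.rpos (u 2)) := by
  by_contra hcon
  have hw0 : D.rpos (w 0) ∉ closedTri (D.rpos (u 0)) (D.rpos (u 1)) (D.rpos (u 2)) := by
    rcases subset_openTri_or_compl (hu.cr_ne_zero hD) (D.isPreconnected_curve (w 0) (w 1))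
      (hu.disjoint_boundary hD (hw 0 1 (by decide)) (nwu _) (nwu _)) with h | h
    · exact absurd (h (left_mem_curve (hw 0 1 (by decide)))) hcon
    · exact h (left_mem_curve (hw 0 1 (by decide)))
  have hQ := fun k l hkl => hu.all_outside hD hw nwu hw0 k l hkl
  have hw1 : D.rpos (w 1) ∉ _ := hQ 1 2 (by decide) (left_mem_curve (hw 1 2 (by decide)))
  have hw2 : D.rpos (w 2) ∉ _ := hQ 1 2 (by decide) (right_mem_curve (hw 1 2 (by decide)))
  have oa := hu.leg_all_outside hD (huw 0) (nwu 0) hw0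
  have ob := hu.rotate.leg_all_outside hD (y := w 1) (huw 1) (fun j => nwu _ _)
    (by simpa only [Fin.isValue, zero_add, show (1 : Fin 3) + 1 = 2 from rfl,
        show (2 : Fin 3) + 1 = 0 from rfl, closedTri_rotate] using hw1)
  have oc := hu.rotate.rotate.leg_all_outside hD (y := w 2) (huw 2) (fun j => nwu _ _)
    (by simpa only [Fin.isValue, zero_add, show (1 : Fin 3) + 1 = 2 from rfl,
        show (2 : Fin 3) + 1 = 0 from rfl, closedTri_rotate] using hw2)
  simp only [Fin.isValue, zero_add, show (1 : Fin 3) + 1 = 2 from rfl,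
        show (2 : Fin 3) + 1 = 0 from rfl, closedTri_rotate] at ob oc
  obtain ⟨Ea, hEa⟩ := exists_isSweep (D := D) (huw 0)
  obtain ⟨Eb, hEb⟩ := exists_isSweep (D := D) (huw 1)
  obtain ⟨Ec, hEc⟩ := exists_isSweep (D := D) (huw 2)
  obtain ⟨Fbc, hFbc⟩ := exists_isSweep (D := D) (hw 1 2 (by decide))
  obtain ⟨Fca, hFca⟩ := exists_isSweep (D := D) (hw 2 0 (by decide))
  obtain ⟨Fab, hFab⟩ := exists_isSweep (D := D) (hw 0 1 (by decide))
  have nuu : ∀ j k, j ≠ k → u j ≠ u k := fun j k h => (hu.adj j k h).ne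
  have nvv : ∀ j k, j ≠ k → v j ≠ v k := fun j k h => (hv j k h).ne
  have nww : ∀ j k, j ≠ k → w j ≠ w k := fun j k h => (hw j k h).ne
  have dLL : ∀ j k, j ≠ k → Disjoint (D.curve (u j) (v j)) (D.curve (u k) (w k)) :=
    fun j k h => hD.disjoint_curve (huv j) (huw k) (nuu _ _ h) (nwu _ _).symm (nvu _ _) (nvw _ _)
  have dLQ : ∀ j k l, k ≠ l → Disjoint (D.curve (u j) (v j)) (D.curve (w k) (w l)) :=
    fun j k l h => hD.disjoint_curve (huv j) (hw k l h) (nwu _ _).symm (nwu _ _).symm (nvw _ _)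
      (nvw _ _)
  have dLS : ∀ j k l, k ≠ l → j ≠ k → j ≠ l →
      Disjoint (D.curve (u j) (v j)) (segment ℝ (D.rpos (u k)) (D.rpos (u l))) := by
    intro j k l h h1 h2
    rw [← hu.curve_eq k l h]
    exact hD.disjoint_curve (huv j) (hu.adj k l h) (nuu _ _ h1) (nuu _ _ h2) (nvu _ _) (nvu _ _)
  have dRL : ∀ k l j, k ≠ l → Disjoint (D.curve (v k) (v l)) (D.curve (u j) (w j)) :=
    fun k l j h => hD.disjoint_curve (hv k l h) (huw j) (nvu _ _) (nvw _ _) (nvu _ _) (nvw _ _)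
  have dRQ : ∀ k l j i, k ≠ l → j ≠ i → Disjoint (D.curve (v k) (v l)) (D.curve (w j) (w i)) :=
    fun k l j i h h' => hD.disjoint_curve (hv k l h) (hw j i h') (nvw _ _) (nvw _ _) (nvw _ _)
      (nvw _ _)
  have dRS : ∀ k l j i, k ≠ l → j ≠ i →
      Disjoint (D.curve (v k) (v l)) (segment ℝ (D.rpos (u j)) (D.rpos (u i))) := by
    intro k l j i h h'
    rw [← hu.curve_eq j i h']
    exact hD.disjoint_curve (hv k l h) (hu.adj j i h') (nvu _ _) (nvu _ _) (nvu _ _) (nvu _ _)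
  refine not_both_outside (hu.cr_ne_zero hD) hEa hEb hEc hFbc hFca hFab
    (D.isPreconnected_curve (u 0) (v 0)) (D.isPreconnected_curve (u 1) (v 1))
    (D.isPreconnected_curve (u 2) (v 2)) (D.isPreconnected_curve (v 0) (v 1))
    (D.isPreconnected_curve (v 2) (v 0))
    (left_mem_curve (huv 0)) (right_mem_curve (huv 0)) (left_mem_curve (huv 1))
    (right_mem_curve (huv 1)) (left_mem_curve (huv 2)) (right_mem_curve (huv 2))
    (left_mem_curve (hv 0 1 (by decide))) (right_mem_curve (hv 0 1 (by decide)))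
    (left_mem_curve (hv 2 0 (by decide))) (right_mem_curve (hv 2 0 (by decide)))
    (dLL _ _ (by decide)) (dLL _ _ (by decide)) (dLQ _ _ _ (by decide)) (dLQ _ _ _ (by decide))
    (dLQ _ _ _ (by decide)) (dLS _ _ _ (by decide) (by decide) (by decide))
    (dLL _ _ (by decide)) (dLL _ _ (by decide)) (dLQ _ _ _ (by decide))
    (dLS _ _ _ (by decide) (by decide) (by decide))
    (dLL _ _ (by decide)) (dLL _ _ (by decide)) (dLQ _ _ _ (by decide))
    (dLS _ _ _ (by decide) (by decide) (by decide)) ?_ ?_ oa ob oc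
    (subset_compl_iff_disjoint_right.1 (hQ _ _ (by decide)))
    (subset_compl_iff_disjoint_right.1 (hQ _ _ (by decide)))
    (subset_compl_iff_disjoint_right.1 (hQ _ _ (by decide))) hout
  · simp only [disjoint_union_right]
    exact ⟨⟨⟨dRL _ _ _ (by decide), dRL _ _ _ (by decide)⟩, dRQ _ _ _ _ (by decide) (by decide)⟩,
      dRS _ _ _ _ (by decide) (by decide)⟩
  · simp only [disjoint_union_right]
    exact ⟨⟨⟨dRL _ _ _ (by decide), dRL _ _ _ (by decide)⟩, dRQ _ _ _ _ (by decide) (by decide)⟩,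
      dRS _ _ _ _ (by decide) (by decide)⟩

end StraightTriangle

end Drawing

/-! ### The lower bound -/

/-- The vertex of the stacked prism in row `i` and column `j`. -/
def rowVertex {m i : ℕ} (hi : i < m) (j : Fin 3) : Fin (3 * m) := ⟨3 * i + j, by omega⟩

section Rows

variable {m : ℕ}

theorem rowVertex_ne {i k : ℕ} (hi : i < m) (hk : k < m) (hik : i ≠ k) (a b : Fin 3) :
    rowVertex hi a ≠ rowVertex hk b := by
  simp only [rowVertex, ne_eq, Fin.mk.injEq]
  omega

theorem adj_row {i : ℕ} (hi : i < m) (j k : Fin 3) (h : j ≠ k) :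
    (prismStack m).Adj (rowVertex hi j) (rowVertex hi k) := by
  rw [prismStack_adj]
  left
  simp only [rowVertex, ne_eq, Fin.mk.injEq]
  omega

theorem adj_leg {i k : ℕ} (hi : i < m) (hk : k < m) (h : i + 1 = k ∨ k + 1 = i) (j : Fin 3) :
    (prismStack m).Adj (rowVertex hi j) (rowVertex hk j) := by
  rw [prismStack_adj]
  right
  simp only [rowVertex]
  omega

/-- If column `0` of some row `k < i` lies inside the straight triangle of row `i`, then so does
column `0` of row `0`, as the path between them avoids row `i`. -/
theorem row_inside {D : OctiDrawing (prismStack m)} (hD : D.IsPlanar) {i : ℕ} (hi : i < m)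
    (hu : StraightTriangle D (rowVertex hi)) {k : ℕ} (hk : k < i)
    (h : D.rpos (rowVertex (hk.trans hi) 0) ∈ openTri (D.rpos (rowVertex hi 0))
      (D.rpos (rowVertex hi 1)) (D.rpos (rowVertex hi 2))) :
    D.rpos (rowVertex ((Nat.zero_le i).trans_lt hi) 0) ∈ openTri (D.rpos (rowVertex hi 0))
      (D.rpos (rowVertex hi 1)) (D.rpos (rowVertex hi 2)) := by
  induction k with
  | zero => exact h
  | succ k ih =>
    have hadj := adj_leg (m := m) (i := k + 1) (k := k) (hk.trans hi) (by omega) (.inr rfl) 0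
    exact ih (by omega) (subset_openTri (hu.cr_ne_zero hD) (D.isPreconnected_curve _ _)
      (hu.disjoint_boundary hD hadj (fun j => rowVertex_ne _ _ (by omega) _ _)
        (fun j => rowVertex_ne _ _ (by omega) _ _)) (left_mem_curve hadj) h (right_mem_curve hadj))

/-- No row but the last one is drawn without bends, if the interior of the cycle formed by row `0`
contains the next row. The edges of that cycle enter as a set `S` of edges of row `0`. -/
theorem row_not_straight {D : OctiDrawing (prismStack m)} (hD : D.IsPlanar) {i : ℕ}
    (hi : i + 1 < m) (S : Set (Sym2 (Fin (3 * m))))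
    (hS : ∀ e ∈ S, ∃ j k : Fin 3, j ≠ k ∧
      e = s(rowVertex ((Nat.zero_le i).trans_lt (Nat.lt_of_succ_lt hi)) j,
        rowVertex ((Nat.zero_le i).trans_lt (Nat.lt_of_succ_lt hi)) k))
    (hint : D.rpos (rowVertex hi 0) ∈ interiorOf D S) :
    ¬ StraightTriangle D (rowVertex (Nat.lt_of_succ_lt hi)) := by
  intro hu
  have hi' := Nat.lt_of_succ_lt hi
  have hcr := hu.cr_ne_zero hD
  have hout : D.rpos (rowVertex hi 0) ∉ closedTri (D.rpos (rowVertex hi' 0))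
      (D.rpos (rowVertex hi' 1)) (D.rpos (rowVertex hi' 2)) := by
    obtain ⟨j, hj⟩ := hu.exists_outside hD (v := rowVertex hi)
      (fun j => adj_leg _ _ (.inl rfl) j) (fun j k => rowVertex_ne _ _ (by omega) _ _)
    exact hu.all_outside hD (adj_row hi) (fun j k => rowVertex_ne _ _ (by omega) _ _) hj 0 1
      (by decide) (left_mem_curve (adj_row hi 0 1 (by decide)))
  refine not_isBounded_component hcr (X := edgesImage D S) ?_ hout hint.2
  intro z hz
  simp only [edgesImage, mem_iUnion] at hz
  obtain ⟨e, he, hz⟩ := hz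
  obtain ⟨j, k, hjk, rfl⟩ := hS e he
  change z ∈ D.curve _ _ at hz
  rcases Nat.eq_zero_or_pos i with rfl | hpos
  · rw [hu.curve_eq j k hjk] at hz
    have hb := closedTri_rotate (D.rpos (rowVertex hi' 0)) (D.rpos (rowVertex hi' 1))
      (D.rpos (rowVertex hi' 2))
    have hc := closedTri_rotate (D.rpos (rowVertex hi' 1)) (D.rpos (rowVertex hi' 2))
      (D.rpos (rowVertex hi' 0))
    have s0 := segment_subset_closedTri hcr
    have s1 := segment_subset_closedTri (hu.rotate.cr_ne_zero hD)
    have s2 := segment_subset_closedTri (hu.rotate.rotate.cr_ne_zero hD)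
    simp only [Fin.isValue, zero_add, show (1 : Fin 3) + 1 = 2 from rfl,
        show (2 : Fin 3) + 1 = 0 from rfl, hb, hc] at s1 s2
    fin_cases j <;> fin_cases k <;> first | exact absurd rfl hjk | skip
    · exact s2 hz
    · exact s1 (by rw [segment_symm]; exact hz)
    · exact s2 (by rw [segment_symm]; exact hz)
    · exact s0 hz
    · exact s1 hz
    · exact s0 (by rw [segment_symm]; exact hz)
  · have hp : i - 1 < m := by omega
    have hin := hu.pred_inside hD (v := rowVertex hi) (w := rowVertex hp) (adj_row _) (adj_row _)
      (fun j => adj_leg _ _ (.inl rfl) j) (fun j => adj_leg _ _ (.inr (by omega)) j)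
      (fun j k => rowVertex_ne _ _ (by omega) _ _) (fun j k => rowVertex_ne _ _ (by omega) _ _)
      (fun j k => rowVertex_ne _ _ (by omega) _ _) hout
    have h0 := row_inside hD hi' hu (k := i - 1) (by omega) hin
    have hz0 : 0 < m := by omega
    -- all edges of row `0` are drawn on the same side of the straight triangle
    have hsub : ∀ a b : Fin 3, a ≠ b → D.rpos (rowVertex hz0 a) ∈ openTri
        (D.rpos (rowVertex hi' 0)) (D.rpos (rowVertex hi' 1)) (D.rpos (rowVertex hi' 2)) →
        D.curve (rowVertex hz0 a) (rowVertex hz0 b) ⊆ openTri (D.rpos (rowVertex hi' 0))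
          (D.rpos (rowVertex hi' 1)) (D.rpos (rowVertex hi' 2)) := fun a b hab ha =>
      subset_openTri hcr (D.isPreconnected_curve _ _)
        (hu.disjoint_boundary hD (adj_row hz0 a b hab)
          (fun j => rowVertex_ne _ _ (by omega) _ _) (fun j => rowVertex_ne _ _ (by omega) _ _))
        (left_mem_curve (adj_row hz0 a b hab)) ha
    have hj : D.rpos (rowVertex hz0 j) ∈ openTri (D.rpos (rowVertex hi' 0))
        (D.rpos (rowVertex hi' 1)) (D.rpos (rowVertex hi' 2)) := by
      by_cases h : (0 : Fin 3) = j
      · exact h ▸ h0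
      · exact hsub 0 j h h0 (right_mem_curve (adj_row hz0 0 j h))
    exact openTri_subset_closedTri _ _ _ (hsub j k hjk hj hz)

/-- Bent edges in distinct rows are distinct, so that one bent edge in every row but the last gives
`m - 1` bends. -/
theorem le_totalBends {D : OctiDrawing (prismStack m)}
    (h : ∀ i (hi : i + 1 < m), ¬ StraightTriangle D (rowVertex (Nat.lt_of_succ_lt hi))) :
    m - 1 ≤ D.totalBends := by
  have hex : ∀ i : Fin (m - 1), ∃ e ∈ (prismStack m).edgeSet,
      1 ≤ (D.poly e).bends ∧ ∀ x ∈ e, x.val / 3 = i.val := by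
    intro i
    have hi : i.val + 1 < m := by omega
    by_contra hcon
    push Not at hcon
    refine h i hi ⟨adj_row _, fun j k hjk => ?_⟩
    by_contra hb
    obtain ⟨x, hx, hx'⟩ := hcon _ (adj_row (Nat.lt_of_succ_lt hi) j k hjk)
      (Nat.one_le_iff_ne_zero.2 hb)
    apply hx'
    rw [Sym2.mem_iff] at hx
    rcases hx with rfl | rfl <;> simp only [rowVertex] <;> omega
  choose e he hb hrow using hex
  have hinj : Function.Injective e := by
    intro i k hik
    obtain ⟨x, hx⟩ : ∃ x, x ∈ e i := by
      induction e i using Sym2.ind with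
      | _ x y => exact ⟨x, Sym2.mem_mk_left x y⟩
    exact Fin.ext ((hrow i x hx).symm.trans (hrow k x (hik ▸ hx)))
  calc m - 1 = ∑ _i : Fin (m - 1), 1 := by simp
    _ ≤ ∑ i : Fin (m - 1), (D.poly (e i)).bends := Finset.sum_le_sum fun i _ => hb i
    _ = ∑ x ∈ Finset.univ.map ⟨e, hinj⟩, (D.poly x).bends := by rw [Finset.sum_map]; rfl
    _ ≤ D.totalBends := by
      apply Finset.sum_le_sum_of_subset
      intro x hx
      simp only [Finset.mem_map, Finset.mem_univ, true_and, Function.Embedding.coeFn_mk] at hx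
      obtain ⟨i, rfl⟩ := hx
      simpa using he i

end Rows

end

/-- For every `m ≥ 2` there exist a triconnected planar simple graph `G`
with maximum degree at most `4` on `n = 3m` vertices and a cycle `C` in `G` such that every
planar octilinear drawing of `G` placing all vertices not on `C` in the interior of `C`
has at least `n/3 - 1 = m - 1` bends in total. -/
theorem exists_deg4_graph_with_bend_lower_bound (m : ℕ) (hm : 2 ≤ m) :
    ∃ G : SimpleGraph (Fin (3 * m)),
      Triconnected G ∧ GraphPlanar G ∧ MaxDegLE G 4 ∧
      ∃ (v : Fin (3 * m)) (C : G.Walk v v), C.IsCycle ∧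
        ∀ D : OctiDrawing G, D.IsPlanar →
          (∀ w, w ∉ C.support → toR (D.pos w) ∈ interiorOf D {e | e ∈ C.edges}) →
          m - 1 ≤ D.totalBends := by
  have h0 : 0 < m := by omega
  have ne : ∀ j k : Fin 3, j ≠ k → rowVertex h0 j ≠ rowVertex h0 k :=
    fun j k h => (adj_row h0 j k h).ne
  refine ⟨prismStack m, prismStack_triconnected hm, prismStack_planar m, prismStack_maxDegLE m,
    rowVertex h0 0, .cons (adj_row h0 0 1 (by decide)) (.cons (adj_row h0 1 2 (by decide))
      (.cons (adj_row h0 2 0 (by decide)) .nil)), ?_, ?_⟩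
  · simp [SimpleGraph.Walk.cons_isCycle_iff, SimpleGraph.Walk.cons_isPath_iff,
      ne 1 2 (by decide), ne 1 0 (by decide), ne 2 0 (by decide), ne 0 1 (by decide),
      ne 0 2 (by decide)]
  · intro D hD hint
    refine le_totalBends fun i hi => row_not_straight hD hi _ ?_ (hint (rowVertex hi 0) ?_)
    · intro e he
      simp only [SimpleGraph.Walk.edges_cons, SimpleGraph.Walk.edges_nil, List.mem_cons,
        List.not_mem_nil, or_false, Set.mem_ofPred_eq] at he
      rcases he with rfl | rfl | rfl
      · exact ⟨0, 1, by decide, rfl⟩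
      · exact ⟨1, 2, by decide, rfl⟩
      · exact ⟨2, 0, by decide, rfl⟩
    · simp [rowVertex_ne hi h0 (by omega)]
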